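/- Let a, b, c, d, e ∈ ℂ \ (1/2)ℤ with b+d ∉ (1/2)ℤ, a+b−e ∈ {0,1,…,n−1} and d+e−c ∈ {0,1,…,n−1}. Then the following identity of linear maps V^c → V^a ⊗ V^b ⊗ V^d holds: (Y_e^{a,b} ⊗ id_{V^d}) ∘ Y_c^{e,d} = Σ_f {a b e; d c f}_ξ · (id_{V^a} ⊗ Y_f^{b,d}) ∘ Y_c^{a,f}, where f ranges over the (finitely many) complex numbers with b+d−f ∈ {0,1,…,n−1} and a+f−c ∈ {0,1,…,n−1}. -/

import Mathlib

open Complex Finset Filter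
open scoped Matrix Kronecker Real

noncomputable section

/-- `ξ^a = exp(π √-1 a / n)` for the `2n`-th root of unity `ξ = exp(π √-1/n)`. -/
def xic (n : ℕ) (a : ℂ) : ℂ := Complex.exp (Real.pi * Complex.I * a / n)

/-- `{a} = ξ^a - ξ^{-a}`. -/
def qn (n : ℕ) (a : ℂ) : ℂ := xic n a - xic n (-a)

/-- `{k}! = {1}{2}⋯{k}`. -/
def qfac (n : ℕ) (k : ℕ) : ℂ := ∏ j ∈ Finset.range k, qn n ((j : ℂ) + 1)

-- The quantum binomial `[a¦b]`, defined (and nonzero) only when `a - b ∈ {0,1,…,n-1}`.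
open Classical in
def qbin (n : ℕ) (a b : ℂ) : ℂ :=
  if h : ∃ k : ℕ, k < n ∧ a - b = (k : ℂ) then
    ∏ j ∈ Finset.range h.choose, qn n (a - (j : ℂ)) / qn n (a - b - (j : ℂ))
  else 0

/-- `[a] = {a}/{1}`. -/
def qint (n : ℕ) (a : ℂ) : ℂ := qn n a / qn n 1

/-- `a` is not a half-integer. -/
def NotHalfInt (a : ℂ) : Prop := ∀ m : ℤ, a ≠ (m : ℂ) / 2

/-- `x ∈ {0, 1, …, n-1}` (as a complex number). -/
def InZn (n : ℕ) (x : ℂ) : Prop := ∃ k : ℕ, k < n ∧ x = (k : ℂ)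

/-- The matrix of `E` on `V^a = ℂ^n`: `E e_j = [j] e_{j-1}` (independent of `a`). -/
def Emat (n : ℕ) : Matrix (Fin n) (Fin n) ℂ :=
  Matrix.of fun i j => if (j : ℕ) = (i : ℕ) + 1 then qint n ((j : ℕ) : ℂ) else 0

/-- The matrix of `F` on `V^a`: `F e_j = [2a-j] e_{j+1}` (with `e_n = 0`). -/
def Fmat (n : ℕ) (a : ℂ) : Matrix (Fin n) (Fin n) ℂ :=
  Matrix.of fun i j => if (i : ℕ) = (j : ℕ) + 1 then qint n (2 * a - ((j : ℕ) : ℂ)) else 0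

/-- The matrix of `K` on `V^a`: `K e_j = ξ^{a-j} e_j`. -/
def Kmat (n : ℕ) (a : ℂ) : Matrix (Fin n) (Fin n) ℂ :=
  Matrix.of fun i j => if i = j then xic n (a - ((i : ℕ) : ℂ)) else 0

/-- The matrix of `K⁻¹` on `V^a`. -/
def Kinvmat (n : ℕ) (a : ℂ) : Matrix (Fin n) (Fin n) ℂ :=
  Matrix.of fun i j => if i = j then xic n (-(a - ((i : ℕ) : ℂ))) else 0

/-- The `R`-matrix `R_{a,b} : V^a ⊗ V^b → V^b ⊗ V^a`:
`R(e_u ⊗ e_v) = Σ_m {m}! ξ^{2(a-u)(b-v) - m(a-b-u+v) - m(m+1)/2} [u¦u-m] [2b-v¦2b-v-m]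
e_{v+m} ⊗ e_{u-m}`; the entry at row `(h,k)`, column `(u,v)` is the coefficient of
`e_h ⊗ e_k`, nonzero only when `h + k = u + v` and `h ≥ v` (with `m = h - v`). -/
def Rmat (n : ℕ) (a b : ℂ) : Matrix (Fin n × Fin n) (Fin n × Fin n) ℂ :=
  Matrix.of fun p q =>
    if ((p.1 : ℕ) + (p.2 : ℕ) = (q.1 : ℕ) + (q.2 : ℕ)) ∧ ((q.2 : ℕ) ≤ (p.1 : ℕ)) then
      (fun m : ℕ =>
        qfac n m *
        xic n (2 * (a - ((q.1 : ℕ) : ℂ)) * (b - ((q.2 : ℕ) : ℂ))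
            - (m : ℂ) * (a - b - ((q.1 : ℕ) : ℂ) + ((q.2 : ℕ) : ℂ))
            - (m : ℂ) * ((m : ℂ) + 1) / 2) *
        qbin n ((q.1 : ℕ) : ℂ) (((q.1 : ℕ) : ℂ) - (m : ℂ)) *
        qbin n (2 * b - ((q.2 : ℕ) : ℂ)) (2 * b - ((q.2 : ℕ) : ℂ) - (m : ℂ)))
      ((p.1 : ℕ) - (q.2 : ℕ))
    else 0

/-- The Clebsch-Gordan quantum coefficient `C^{a,b,c}_{u,v,t}`. -/
def CG (n : ℕ) (a b c : ℂ) (u v t : ℕ) : ℂ :=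
  Complex.exp (Real.pi * Complex.I * (c - a - b) / 2) *
  (-1 : ℂ) ^ ((v : ℤ) - (t : ℤ)) *
  xic n (((v : ℂ) * (2 * b - (v : ℂ) + 1) - (u : ℂ) * (2 * a - (u : ℂ) + 1)) / 2) *
  (qbin n (2 * c) (2 * c - (t : ℂ)))⁻¹ *
  qbin n (2 * c) (a + b + c - ((n : ℂ) - 1)) *
  ∑ z ∈ Finset.range (t + 1),
    (-1 : ℂ) ^ z * xic n ((2 * (z : ℂ) - (t : ℂ)) * (2 * c - (t : ℂ) + 1) / 2) *
    qbin n (a + b - c) ((u : ℂ) - (z : ℂ)) *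
    qbin n (2 * a - (u : ℂ) + (z : ℂ)) (2 * a - (u : ℂ)) *
    qbin n (2 * b - (v : ℂ) + ((t : ℂ) - (z : ℂ))) (2 * b - (v : ℂ))

-- The inclusion `Y_c^{a,b} : V^c → V^a ⊗ V^b`.
open Classical in
def Yinc (n : ℕ) (a b c : ℂ) : Matrix (Fin n × Fin n) (Fin n) ℂ :=
  Matrix.of fun p t =>
    if ((p.1 : ℕ) : ℂ) + ((p.2 : ℕ) : ℂ) - ((t : ℕ) : ℂ) = a + b - c then
      CG n a b c (p.1 : ℕ) (p.2 : ℕ) (t : ℕ)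
    else 0

-- The projection `Y_{a,b}^c : V^a ⊗ V^b → V^c`.
open Classical in
def Yproj (n : ℕ) (a b c : ℂ) : Matrix (Fin n) (Fin n × Fin n) ℂ :=
  Matrix.of fun t p =>
    if ((p.1 : ℕ) : ℂ) + ((p.2 : ℕ) : ℂ) - ((t : ℕ) : ℂ) = a + b - c then
      CG n ((n : ℂ) - 1 - b) ((n : ℂ) - 1 - a) ((n : ℂ) - 1 - c)
        (n - 1 - (p.2 : ℕ)) (n - 1 - (p.1 : ℕ)) (n - 1 - (t : ℕ))
    else 0

-- Extracts the natural number `k` with `x = k` (0 if there is none).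
open Classical in
def natIdx (x : ℂ) : ℕ := if h : ∃ k : ℕ, x = (k : ℂ) then h.choose else 0

/-- The `SL(2,ℂ)` quantum 6j-symbol `{a b e; d c f}_ξ`. -/
def sixj (n : ℕ) (a b e d c f : ℂ) : ℂ :=
  (-1 : ℂ) ^ (n - 1 + natIdx (a + f - c)) *
  (qbin n (2 * f + (n : ℂ)) (2 * f + 1))⁻¹ *
  (qfac n (natIdx (d + e - c)) * qfac n (natIdx (a + b - e)) /
    (qfac n (natIdx (b + d - f)) * qfac n (natIdx (a + f - c)))) *
  qbin n (2 * e) (a + b + e + 1 - (n : ℂ)) *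
  (qbin n (2 * e) (e + c - d))⁻¹ *
  ∑ z ∈ Finset.Icc (natIdx (d + e - c) - natIdx (b + d - f))
      (min (natIdx (d + e - c)) (natIdx (a + f - c))),
    (-1 : ℂ) ^ z * qbin n (a + f + c + 1) (2 * c + (z : ℂ) + 1) *
    qbin n ((a + c - f) + (z : ℂ)) (a + c - f) *
    qbin n ((b + f - d) + (d + e - c) - (z : ℂ)) (b + f - d) *
    qbin n ((d + c - e) + (z : ℂ)) (d + f - b)

/-- The tetrahedral symbol `{a b e; d c f}_tet = {a b e; d c f}_ξ · [2f+n¦2f+1]`. -/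
def sixjtet (n : ℕ) (a b e d c f : ℂ) : ℂ :=
  sixj n a b e d c f * qbin n (2 * f + (n : ℂ)) (2 * f + 1)

/-- The Lobachevsky function `Λ(x) = -∫_0^x log|2 sin t| dt`. -/
def lob (x : ℝ) : ℝ := -∫ t in (0 : ℝ)..x, Real.log |2 * Real.sin t|

/-- A triple of integers is admissible. -/
def Admissible (n : ℕ) (i j k : ℤ) : Prop :=
  0 < i ∧ 0 < j ∧ 0 < k ∧ i < (n : ℤ) - 1 ∧ j < (n : ℤ) - 1 ∧ k < (n : ℤ) - 1 ∧
  (n : ℤ) - 1 < i + j + k ∧ i + j + k < 2 * ((n : ℤ) - 1) ∧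
  0 < i + j - k ∧ 0 < j + k - i ∧ 0 < k + i - j ∧
  i + j - k < (n : ℤ) - 1 ∧ j + k - i < (n : ℤ) - 1 ∧ k + i - j < (n : ℤ) - 1


/-- `A ⊗ id` on the third tensor factor, for `A : V^e → V^a ⊗ V^b`. -/
def tensL (n : ℕ) (A : Matrix (Fin n × Fin n) (Fin n) ℂ) :
    Matrix (Fin n × Fin n × Fin n) (Fin n × Fin n) ℂ :=
  Matrix.of fun p q => A (p.1, p.2.1) q.1 * (if p.2.2 = q.2 then 1 else 0)

/-- `id ⊗ A` on the first tensor factor, for `A : V^f → V^b ⊗ V^d`. -/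
def tensR (n : ℕ) (A : Matrix (Fin n × Fin n) (Fin n) ℂ) :
    Matrix (Fin n × Fin n × Fin n) (Fin n × Fin n) ℂ :=
  Matrix.of fun p q => (if p.1 = q.1 then 1 else 0) * A (p.2.1, p.2.2) q.2

/-! ### Basic properties of the quantum numbers -/

theorem xic_add (n : ℕ) (x y : ℂ) : xic n (x + y) = xic n x * xic n y := by
  unfold xic
  rw [← Complex.exp_add]
  congr 1
  ring

theorem xic_ne (n : ℕ) (x : ℂ) : xic n x ≠ 0 := Complex.exp_ne_zero _

theorem xic_zero (n : ℕ) : xic n 0 = 1 := by simp [xic]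

theorem xic_neg (n : ℕ) (x : ℂ) : xic n (-x) = (xic n x)⁻¹ := by
  unfold xic
  rw [← Complex.exp_neg]
  congr 1
  ring

theorem xic_sub (n : ℕ) (x y : ℂ) : xic n (x - y) = xic n x * (xic n y)⁻¹ := by
  rw [sub_eq_add_neg, xic_add, xic_neg]

theorem qn_neg (n : ℕ) (x : ℂ) : qn n (-x) = -qn n x := by
  unfold qn
  simp

theorem qn_zero (n : ℕ) : qn n 0 = 0 := by
  unfold qn
  simp

/-- The even function `ξ^x + ξ^{-x}`. -/
def qc (n : ℕ) (x : ℂ) : ℂ := xic n x + xic n (-x)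

theorem qc_neg (n : ℕ) (x : ℂ) : qc n (-x) = qc n x := by
  unfold qc
  simp [add_comm]

theorem qn_mul (n : ℕ) (x y : ℂ) : qn n x * qn n y = qc n (x + y) - qc n (x - y) := by
  unfold qn qc
  simp only [neg_add, neg_sub, xic_add, xic_neg, xic_sub]
  ring

theorem qn_three (n : ℕ) (A B C : ℂ) :
    qn n (C - A) * qn n (C - B) = qn n C * qn n (C - A - B) + qn n A * qn n B := by
  simp only [qn_mul]
  rw [show C - A - (C - B) = -(A - B) by ring, qc_neg,
    show C - A + (C - B) = C + (C - A - B) by ring, show C - (C - A - B) = A + B by ring]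
  ring

theorem qn_add (n : ℕ) (x y : ℂ) :
    qn n (x + y) = xic n (-y) * qn n x + xic n x * qn n y := by
  unfold qn
  simp only [neg_add, xic_add]
  ring

theorem xic_n (n : ℕ) (hn : 2 ≤ n) : xic n n = -1 := by
  unfold xic
  have : (n : ℂ) ≠ 0 := by
    have : n ≠ 0 := by omega
    exact_mod_cast this
  rw [mul_div_assoc, div_self this, mul_one, Complex.exp_pi_mul_I]

theorem qn_add_n (n : ℕ) (hn : 2 ≤ n) (x : ℂ) : qn n (x + n) = -qn n x := by
  unfold qn
  rw [neg_add, xic_add, xic_add, xic_neg n n, xic_n n hn]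
  norm_num
  ring

theorem qn_n_sub (n : ℕ) (hn : 2 ≤ n) (x : ℂ) : qn n (n - x) = qn n x := by
  rw [show (n : ℂ) - x = -x + n by ring, qn_add_n n hn, qn_neg, neg_neg]

theorem qn_n (n : ℕ) (hn : 2 ≤ n) : qn n n = 0 := by
  have := qn_n_sub n hn 0
  rwa [sub_zero, qn_zero] at this

theorem qn_eq_zero (n : ℕ) (hn : 2 ≤ n) (x : ℂ) (h : qn n x = 0) : ∃ m : ℤ, x = m * n := by
  unfold qn xic at h
  rw [sub_eq_zero, Complex.exp_eq_exp_iff_exists_int] at h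
  obtain ⟨m, hm⟩ := h
  refine ⟨m, ?_⟩
  have h0 : (n : ℂ) ≠ 0 := by
    have : n ≠ 0 := by omega
    exact_mod_cast this
  have hp : (Real.pi : ℂ) ≠ 0 := by exact_mod_cast Real.pi_ne_zero
  have hI := Complex.I_ne_zero
  field_simp at hm
  linear_combination hm / 2

/-- `x` is not an integer. -/
def NotInt (x : ℂ) : Prop := ∀ m : ℤ, x ≠ m

theorem NotInt.add_int {x : ℂ} (h : NotInt x) (m : ℤ) : NotInt (x + m) := by
  intro k hk
  apply h (k - m)
  push_cast
  linear_combination hk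

theorem NotInt.shift {x y : ℂ} (h : NotInt x) (m : ℤ) (e : y = x + m) : NotInt y := by
  rw [e]; exact h.add_int m

theorem NotHalfInt.two {a : ℂ} (h : NotHalfInt a) : NotInt (2 * a) := by
  intro m hm
  apply h m
  linear_combination hm / 2

theorem NotInt.qn_ne {n : ℕ} (hn : 2 ≤ n) {x : ℂ} (h : NotInt x) : qn n x ≠ 0 := by
  intro h0
  obtain ⟨m, hm⟩ := qn_eq_zero n hn x h0
  apply h (m * n)
  push_cast
  exact hm

theorem qn_nat_ne {n : ℕ} (hn : 2 ≤ n) {m : ℕ} (h0 : 0 < m) (h1 : m < n) :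
    qn n (m : ℂ) ≠ 0 := by
  intro h
  obtain ⟨k, hk⟩ := qn_eq_zero n hn _ h
  have hk' : (m : ℤ) = k * n := by exact_mod_cast hk
  have : (n : ℤ) ∣ m := ⟨k, by rw [hk']; ring⟩
  have : n ∣ m := by exact_mod_cast this
  have := Nat.le_of_dvd h0 this
  omega

/-! ### Factorials and Pochhammer symbols -/

theorem qfac_zero (n : ℕ) : qfac n 0 = 1 := by simp [qfac]

theorem qfac_succ (n k : ℕ) : qfac n (k + 1) = qfac n k * qn n ((k : ℂ) + 1) := by
  simp [qfac, Finset.prod_range_succ]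

theorem qfac_ne {n : ℕ} (hn : 2 ≤ n) {k : ℕ} (hk : k < n) : qfac n k ≠ 0 := by
  unfold qfac
  rw [Finset.prod_ne_zero_iff]
  intro j hj
  have := Finset.mem_range.1 hj
  have := qn_nat_ne hn (m := j + 1) (by omega) (by omega)
  push_cast at this
  exact this

theorem qfac_eq_zero {n : ℕ} (hn : 2 ≤ n) {k : ℕ} (hk : n ≤ k) : qfac n k = 0 := by
  unfold qfac
  apply Finset.prod_eq_zero (i := n - 1) (Finset.mem_range.2 (by omega))
  rw [show (((n - 1 : ℕ) : ℂ)) + 1 = n by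
    have : n - 1 + 1 = n := by omega
    exact_mod_cast this]
  exact qn_n n hn

/-- Falling product `{x}{x-1}⋯{x-m+1}`. -/
def fall (n : ℕ) (x : ℂ) (m : ℕ) : ℂ := ∏ i ∈ Finset.range m, qn n (x - i)

/-- Rising product `{x}{x+1}⋯{x+m-1}`. -/
def rise (n : ℕ) (x : ℂ) (m : ℕ) : ℂ := ∏ i ∈ Finset.range m, qn n (x + i)

theorem fall_zero (n : ℕ) (x : ℂ) : fall n x 0 = 1 := by simp [fall]
theorem rise_zero (n : ℕ) (x : ℂ) : rise n x 0 = 1 := by simp [rise]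

theorem fall_succ (n : ℕ) (x : ℂ) (m : ℕ) : fall n x (m + 1) = fall n x m * qn n (x - m) := by
  simp [fall, Finset.prod_range_succ]

theorem rise_succ (n : ℕ) (x : ℂ) (m : ℕ) : rise n x (m + 1) = rise n x m * qn n (x + m) := by
  simp [rise, Finset.prod_range_succ]

theorem fall_add (n : ℕ) (x : ℂ) (m k : ℕ) : fall n x (m + k) = fall n x m * fall n (x - m) k := by
  unfold fall
  rw [Finset.prod_range_add]
  congr 1
  apply Finset.prod_congr rfl
  intro i _
  congr 1
  push_cast
  ring

theorem rise_add (n : ℕ) (x : ℂ) (m k : ℕ) : rise n x (m + k) = rise n x m * rise n (x + m) k := by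
  unfold rise
  rw [Finset.prod_range_add]
  congr 1
  apply Finset.prod_congr rfl
  intro i _
  congr 1
  push_cast
  ring

theorem rise_succ' (n : ℕ) (x : ℂ) (m : ℕ) : rise n x (m + 1) = qn n x * rise n (x + 1) m := by
  rw [add_comm m 1, rise_add]
  simp [rise]

theorem fall_succ' (n : ℕ) (x : ℂ) (m : ℕ) : fall n x (m + 1) = qn n x * fall n (x - 1) m := by
  rw [add_comm m 1, fall_add]
  simp [fall]

theorem rise_neg (n : ℕ) (x : ℂ) (m : ℕ) : rise n (-x) m = (-1) ^ m * fall n x m := by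
  induction m with
  | zero => simp [rise_zero, fall_zero]
  | succ m ih =>
    rw [rise_succ, fall_succ, ih, show -x + (m : ℂ) = -(x - m) by ring, qn_neg]
    ring

theorem rise_eq_fall (n : ℕ) (x : ℂ) (m : ℕ) : rise n x m = fall n (x + m - 1) m := by
  induction m with
  | zero => simp [rise_zero, fall_zero]
  | succ m ih =>
    rw [rise_succ, fall_succ', ih, mul_comm]
    push_cast
    congr 2 <;> ring

theorem fall_ne {n : ℕ} (hn : 2 ≤ n) {x : ℂ} (h : NotInt x) (m : ℕ) : fall n x m ≠ 0 := by
  unfold fall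
  rw [Finset.prod_ne_zero_iff]
  intro j _
  exact (h.shift (-j) (by push_cast; ring)).qn_ne hn

theorem rise_ne {n : ℕ} (hn : 2 ≤ n) {x : ℂ} (h : NotInt x) (m : ℕ) : rise n x m ≠ 0 := by
  unfold rise
  rw [Finset.prod_ne_zero_iff]
  intro j _
  exact (h.shift j (by push_cast; ring)).qn_ne hn

theorem fall_nat (n k m : ℕ) : fall n ((k + m : ℕ) : ℂ) m * qfac n k = qfac n (k + m) := by
  induction m with
  | zero => simp [fall_zero]
  | succ m ih =>
    rw [fall_succ', ← add_assoc, qfac_succ, ← ih]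
    push_cast
    rw [show (k : ℂ) + m + 1 - 1 = k + m by ring]
    ring

theorem fall_nat_self (n m : ℕ) : fall n (m : ℂ) m = qfac n m := by
  have := fall_nat n 0 m
  rwa [zero_add, qfac_zero, mul_one] at this

theorem fall_nat_zero (n k m : ℕ) (h : k < m) : fall n (k : ℂ) m = 0 := by
  unfold fall
  apply Finset.prod_eq_zero (i := k) (Finset.mem_range.2 h)
  rw [sub_self, qn_zero]

/-! ### The q-Saalschütz sum and the Sears transformation -/

theorem saal_aux (n : ℕ) (C N i : ℂ) :
    qn n (N + 1 - i) * qn n (C + N + i) + qn n i * qn n (C + i - 1)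
      = qn n (N + 1) * qn n (C + N) := by
  simp only [qn_mul]
  rw [show N + 1 - i - (C + N + i) = -(C + 2 * i - 1) by ring, qc_neg,
    show i + (C + i - 1) = C + 2 * i - 1 by ring, show i - (C + i - 1) = -(C - 1) by ring, qc_neg,
    show N + 1 - (C + N) = -(C - 1) by ring, qc_neg,
    show N + 1 - i + (C + N + i) = N + 1 + (C + N) by ring]
  ring

theorem saal {n : ℕ} (hn : 2 ≤ n) (A B C : ℂ) (N : ℕ) (hN : N < n) :
    ∑ i ∈ Finset.range (N + 1), rise n A i * rise n B i * rise n (C + i) (N - i) *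
        rise n (C - A - B) (N - i) / (qfac n i * qfac n (N - i))
      = rise n (C - A) N * rise n (C - B) N / qfac n N := by
  induction N with
  | zero => simp [rise_zero, qfac_zero]
  | succ N ih =>
    have ih := ih (by omega)
    set t : ℕ → ℂ := fun i => rise n A i * rise n B i * rise n (C + i) (N - i) *
        rise n (C - A - B) (N - i) / (qfac n i * qfac n (N - i)) with ht
    set p : ℕ → ℂ := fun i => t i * (qn n (C + N + i) * qn n (C - A - B + N - i)) with hp
    set q : ℕ → ℂ := fun i => t i * (qn n (A + i) * qn n (B + i)) with hq
    have hN1 : qn n ((N : ℂ) + 1) ≠ 0 := by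
      have := qn_nat_ne hn (m := N + 1) (by omega) hN
      push_cast at this
      exact this
    have hfN := qfac_ne hn (k := N) (by omega)
    have key : (∑ i ∈ Finset.range (N + 1), t i) * (qn n (C - A + N) * qn n (C - B + N))
        = ∑ i ∈ Finset.range (N + 1), p i + ∑ i ∈ Finset.range (N + 1), q i := by
      rw [Finset.sum_mul, ← Finset.sum_add_distrib]
      apply Finset.sum_congr rfl
      intro i _
      simp only [hp, hq]
      rw [← mul_add]
      congr 1
      have := qn_three n (A + i) (B + i) (C + N + i)
      rw [show C + N + i - (A + i) = C - A + N by ring,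
        show C + N + i - (B + i) = C - B + N by ring,
        show C - A + N - (B + i) = C - A - B + N - i by ring] at this
      exact this
    rw [Finset.sum_range_succ', Finset.sum_range_succ]
    rw [Finset.sum_range_succ' p, Finset.sum_range_succ q, ih] at key
    have e0 : rise n A 0 * rise n B 0 * rise n (C + (0 : ℕ)) (N + 1 - 0) *
        rise n (C - A - B) (N + 1 - 0) / (qfac n 0 * qfac n (N + 1 - 0))
        = p 0 / qn n ((N : ℂ) + 1) := by
      simp only [hp, ht, Nat.sub_zero, Nat.cast_zero, add_zero, sub_zero, rise_succ, qfac_succ,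
        qfac_zero, rise_zero]
      field_simp
    have eN : rise n A (N + 1) * rise n B (N + 1) * rise n (C + ((N + 1 : ℕ) : ℂ)) (N + 1 - (N + 1)) *
        rise n (C - A - B) (N + 1 - (N + 1)) / (qfac n (N + 1) * qfac n (N + 1 - (N + 1)))
        = q N / qn n ((N : ℂ) + 1) := by
      simp only [hq, ht, Nat.sub_self, rise_succ, qfac_succ,
        qfac_zero, rise_zero]
      field_simp
    have ei : ∀ i ∈ Finset.range N,
        rise n A (i + 1) * rise n B (i + 1) * rise n (C + ((i + 1 : ℕ) : ℂ)) (N + 1 - (i + 1)) *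
        rise n (C - A - B) (N + 1 - (i + 1)) / (qfac n (i + 1) * qfac n (N + 1 - (i + 1)))
        = (p (i + 1) + q i) / qn n ((N : ℂ) + 1) := by
      intro i hi
      have hi' := Finset.mem_range.1 hi
      obtain ⟨r, rfl⟩ : ∃ r, N = i + 1 + r := ⟨N - (i + 1), by omega⟩
      simp only [hp, hq, ht]
      rw [show i + 1 + r + 1 - (i + 1) = r + 1 by omega, show i + 1 + r - (i + 1) = r by omega,
        show i + 1 + r - i = r + 1 by omega]
      have hr := qfac_ne hn (k := r) (by omega)
      have hfi := qfac_ne hn (k := i) (by omega)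
      have hr1 : qn n ((r : ℂ) + 1) ≠ 0 := by
        have := qn_nat_ne hn (m := r + 1) (by omega) (by omega)
        push_cast at this
        exact this
      have hi1 : qn n ((i : ℂ) + 1) ≠ 0 := by
        have := qn_nat_ne hn (m := i + 1) (by omega) (by omega)
        push_cast at this
        exact this
      have haux := saal_aux n C ((i + 1 + r : ℕ) : ℂ) ((i + 1 : ℕ) : ℂ)
      rw [rise_succ' n (C + i) r, rise_succ n (C + ((i + 1 : ℕ) : ℂ)) r]
      simp only [rise_succ, qfac_succ]
      push_cast at haux hN1 ⊢
      rw [show C + (i : ℂ) + 1 = C + (i + 1) by ring]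
      rw [show C + ((i : ℂ) + 1) + r = C + (i + 1 + r) by ring,
       show C - A - B + ((i : ℂ) + 1 + r) - (i + 1) = C - A - B + r by ring]
      rw [show (i : ℂ) + 1 + r + 1 - (i + 1) = r + 1 by ring,
        show C + ((i : ℂ) + 1) - 1 = C + i by ring] at haux
      field_simp
      linear_combination (-1 : ℂ) * rise n A i * qn n (A + ↑i) * rise n B i * qn n (B + ↑i) *
        rise n (C + (↑i + 1)) r * rise n (C - A - B) r * qn n (C - A - B + ↑r) * haux
    rw [e0, eN, Finset.sum_congr rfl ei, ← Finset.sum_div, Finset.sum_add_distrib, ← add_div,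
      ← add_div, show ∑ i ∈ Finset.range N, p (i + 1) + ∑ i ∈ Finset.range N, q i + q N + p 0
        = ∑ i ∈ Finset.range N, p (i + 1) + p 0 + (∑ i ∈ Finset.range N, q i + q N) by ring,
      ← key, rise_succ, rise_succ, qfac_succ]
    field_simp

theorem sum_swap (N : ℕ) (f : ℕ → ℕ → ℂ) :
    ∑ y ∈ Finset.range (N + 1), ∑ k ∈ Finset.range (y + 1), f y k
      = ∑ k ∈ Finset.range (N + 1), ∑ i ∈ Finset.range (N - k + 1), f (k + i) k := by
  rw [Finset.sum_sigma', Finset.sum_sigma']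
  refine Finset.sum_nbij' (fun x => ⟨x.2, x.1 - x.2⟩) (fun x => ⟨x.1 + x.2, x.1⟩) ?_ ?_ ?_ ?_ ?_
  · rintro ⟨y, k⟩ h
    simp only [Finset.mem_sigma, Finset.mem_range] at h ⊢
    omega
  · rintro ⟨y, k⟩ h
    simp only [Finset.mem_sigma, Finset.mem_range] at h ⊢
    omega
  · rintro ⟨y, k⟩ h
    simp only [Finset.mem_sigma, Finset.mem_range] at h ⊢
    congr 1
    omega
  · rintro ⟨y, k⟩ h
    simp
  · rintro ⟨y, k⟩ h
    simp only [Finset.mem_sigma, Finset.mem_range] at h ⊢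
    congr 1
    omega

theorem sears {n : ℕ} (hn : 2 ≤ n) (A B C D E F : ℂ) (N : ℕ) (hN : N < n)
    (hbal : D + E + F = A + B + C - N + 1) :
    ∑ y ∈ Finset.range (N + 1), (-1) ^ y * rise n A y * rise n B y * rise n C y *
        rise n (D + y) (N - y) * rise n (E + y) (N - y) * rise n (F + y) (N - y) /
        (qfac n y * qfac n (N - y))
      = ∑ k ∈ Finset.range (N + 1), (-1) ^ k * rise n A k * rise n (D - B) k * rise n (D - C) k *
        rise n (D + k) (N - k) * rise n (E - A) (N - k) * rise n (F - A) (N - k) /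
        (qfac n k * qfac n (N - k)) := by
  have h1 : ∀ y ∈ Finset.range (N + 1), (-1) ^ y * rise n A y * rise n B y * rise n C y *
        rise n (D + y) (N - y) * rise n (E + y) (N - y) * rise n (F + y) (N - y) /
        (qfac n y * qfac n (N - y)) = ∑ k ∈ Finset.range (y + 1),
          ((-1) ^ y * rise n A y * rise n (D + y) (N - y) * rise n (E + y) (N - y) *
            rise n (F + y) (N - y) / qfac n (N - y)) *
          (rise n (D - B) k * rise n (D - C) k * rise n (D + k) (y - k) *
            rise n (B + C - D) (y - k) / (qfac n k * qfac n (y - k))) := by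
    intro y hy
    have := Finset.mem_range.1 hy
    have hs := saal hn (D - B) (D - C) D y (by omega)
    rw [show D - (D - B) - (D - C) = B + C - D by ring, sub_sub_cancel, sub_sub_cancel] at hs
    rw [← Finset.mul_sum, hs]
    have hfy := qfac_ne hn (k := y) (by omega)
    have hfNy := qfac_ne hn (k := N - y) (by omega)
    field_simp
  rw [Finset.sum_congr rfl h1, sum_swap]
  apply Finset.sum_congr rfl
  intro k hk
  have hk := Finset.mem_range.1 hk
  obtain ⟨M, rfl⟩ : ∃ M, N = k + M := ⟨N - k, by omega⟩
  rw [Nat.add_sub_cancel_left]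
  have hs := saal hn (A + k) (B + C - D) (E + k) M (by omega)
  have hfM := qfac_ne hn (k := M) (by omega)
  have hfk := qfac_ne hn (k := k) (by omega)
  have e1 : rise n (E + k - (B + C - D)) M = (-1) ^ M * rise n (F - A) M := by
    rw [show E + k - (B + C - D) = -(F - A + M - 1) by
      push_cast at hbal; linear_combination hbal, rise_neg, rise_eq_fall]
  rw [e1] at hs
  have h2 : ∀ i ∈ Finset.range (M + 1),
      ((-1) ^ (k + i) * rise n A (k + i) * rise n (D + ((k + i : ℕ) : ℂ)) (k + M - (k + i)) *
        rise n (E + ((k + i : ℕ) : ℂ)) (k + M - (k + i)) *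
            rise n (F + ((k + i : ℕ) : ℂ)) (k + M - (k + i)) / qfac n (k + M - (k + i))) *
          (rise n (D - B) k * rise n (D - C) k * rise n (D + k) (k + i - k) *
            rise n (B + C - D) (k + i - k) / (qfac n k * qfac n (k + i - k)))
      = ((-1) ^ (k + M) * rise n A k * rise n (D - B) k * rise n (D - C) k * rise n (D + k) M
          / qfac n k) * (rise n (A + k) i * rise n (B + C - D) i * rise n (E + k + i) (M - i) *
        rise n (E + k - (A + k) - (B + C - D)) (M - i) / (qfac n i * qfac n (M - i))) := by
    intro i hi
    have hi := Finset.mem_range.1 hi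
    obtain ⟨r, rfl⟩ : ∃ r, M = i + r := ⟨M - i, by omega⟩
    rw [show k + (i + r) - (k + i) = r by omega, show k + i - k = i by omega,
      show i + r - i = r by omega]
    have e2 : rise n (E + k - (A + k) - (B + C - D)) r
        = (-1) ^ r * rise n (F + ((k + i : ℕ) : ℂ)) r := by
      rw [show E + k - (A + k) - (B + C - D) = -(F + ((k + i : ℕ) : ℂ) + r - 1) by
        push_cast at hbal ⊢; linear_combination hbal, rise_neg, rise_eq_fall n (F + _)]
    rw [e2, rise_add n A, rise_add n (D + k)]
    have hs1 : (-1 : ℂ) ^ (k + (i + r)) * (-1) ^ r = (-1) ^ (k + i) := by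
      rw [← pow_add, show k + (i + r) + r = k + i + 2 * r by ring, pow_add _ (k + i), pow_mul]
      simp
    rw [← hs1]
    push_cast
    rw [show D + ((k : ℂ) + i) = D + k + i by ring, show E + ((k : ℂ) + i) = E + k + i by ring]
    ring
  rw [Finset.sum_congr rfl h2, ← Finset.mul_sum, hs, show E + k - (A + k) = E - A by ring]
  have hs2 : (-1 : ℂ) ^ (k + M) * (-1) ^ M = (-1) ^ k := by
    rw [← pow_add, show k + M + M = k + 2 * M by ring, pow_add, pow_mul]
    simp
  rw [← hs2]
  field_simp

/-! ### The orthogonality sum -/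

theorem orth_aux (n : ℕ) (M Y m : ℂ) :
    qn n (M - m) * qn n (Y - m) + qn n m * qn n (Y - m - M) = qn n M * qn n (Y - 2 * m) := by
  simp only [qn_mul]
  rw [show M - m - (Y - m) = -(Y - M) by ring, qc_neg, show m + (Y - m - M) = Y - M by ring,
    show m - (Y - m - M) = -(Y - 2 * m - M) by ring, qc_neg,
    show M - (Y - 2 * m) = -(Y - 2 * m - M) by ring, qc_neg,
    show M - m + (Y - m) = M + (Y - 2 * m) by ring]
  ring

theorem orth_partial {n : ℕ} (hn : 2 ≤ n) (M : ℕ) (hM : M < n) (Y : ℂ) (hY : NotInt Y)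
    (m : ℕ) (hm : m < M) :
    ∑ i ∈ Finset.range (m + 1), (-1) ^ i * qn n (Y - 2 * i) /
        (qfac n i * qfac n (M - i) * fall n (Y - i) (M + 1))
      = (-1) ^ m / (qn n M * qfac n m * qfac n (M - m - 1) * fall n (Y - m - 1) M) := by
  have hMne := qn_nat_ne hn (m := M) (by omega) hM
  induction m with
  | zero =>
    obtain ⟨r, rfl⟩ : ∃ r, M = r + 1 := ⟨M - 1, by omega⟩
    have h1 := fall_ne hn (hY.shift (-1) (y := Y - 1) (by push_cast; ring)) (r + 1)
    have h2 := hY.qn_ne hn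
    have h3 := qfac_ne hn (k := r) (by omega)
    push_cast at hMne
    simp [qfac_zero, qfac_succ, fall_succ' n Y]
    field_simp
  | succ m ih =>
    rw [Finset.sum_range_succ, ih (by omega)]
    obtain ⟨r, rfl⟩ : ∃ r, M = m + 1 + 1 + r := ⟨M - (m + 2), by omega⟩
    rw [show m + 1 + 1 + r - m - 1 = r + 1 by omega, show m + 1 + 1 + r - (m + 1) = r + 1 by omega,
      show r + 1 - 1 = r by omega]
    have haux := orth_aux n ((m + 1 + 1 + r : ℕ) : ℂ) Y ((m + 1 : ℕ) : ℂ)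
    have hN : NotInt (Y - m - 1) := hY.shift (-m - 1) (by push_cast; ring)
    rw [fall_succ n (Y - ((m + 1 : ℕ) : ℂ)) (m + 1 + 1 + r)]
    have e1 : fall n (Y - ((m + 1 : ℕ) : ℂ)) (m + 1 + 1 + r)
      = qn n (Y - m - 1) * fall n (Y - m - 1 - 1) (m + 1 + r) := by
      rw [show m + 1 + 1 + r = m + 1 + r + 1 by ring, fall_succ']
      push_cast
      rw [show Y - ((m : ℂ) + 1) = Y - m - 1 by ring]
    have e2 : fall n (Y - (m : ℂ) - 1) (m + 1 + 1 + r)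
      = qn n (Y - m - 1) * fall n (Y - m - 1 - 1) (m + 1 + r) := by
      rw [show m + 1 + 1 + r = m + 1 + r + 1 by ring, fall_succ']
    have e3 : fall n (Y - ((m + 1 : ℕ) : ℂ) - 1) (m + 1 + 1 + r)
      = fall n (Y - m - 1 - 1) (m + 1 + r) * qn n (Y - m - 1 - 1 - (m + 1 + r)) := by
      rw [show m + 1 + 1 + r = m + 1 + r + 1 by ring, fall_succ]
      push_cast
      rw [show Y - ((m : ℂ) + 1) - 1 = Y - m - 1 - 1 by ring]
    rw [e1, e2, e3]
    simp only [qfac_succ, pow_succ]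
    have h1 := fall_ne hn (hN.shift (-1) (y := Y - m - 1 - 1) (by push_cast; ring)) (m + 1 + r)
    have h2 := hN.qn_ne hn
    have h3 := qfac_ne hn (k := r) (by omega)
    have h4 := qfac_ne hn (k := m) (by omega)
    have h5 := qn_nat_ne hn (m := m + 1) (by omega) (by omega)
    have h6 := qn_nat_ne hn (m := r + 1) (by omega) (by omega)
    have h7 := (hN.shift (-1 - (m + 1 + r)) (y := Y - m - 1 - 1 - (m + 1 + r))
      (by push_cast; ring)).qn_ne hn
    push_cast at *
    rw [show (m : ℂ) + 1 + 1 + r - (m + 1) = r + 1 by ring,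
      show Y - ((m : ℂ) + 1) - (m + 1 + 1 + r) = Y - m - 1 - 1 - (m + 1 + r) by ring,
      show Y - ((m : ℂ) + 1) = Y - m - 1 by ring] at haux
    rw [show Y - ((m : ℂ) + 1) - (m + 1 + 1 + r) = Y - m - 1 - 1 - (m + 1 + r) by ring]
    rw [show Y - 2 * ((m : ℂ) + 1) = Y - ((m : ℂ) + 1) * 2 by ring] at *
    field_simp
    linear_combination haux

theorem orth {n : ℕ} (hn : 2 ≤ n) (M : ℕ) (hM : M < n) (Y : ℂ) (hY : NotInt Y) :
    ∑ i ∈ Finset.range (M + 1), (-1) ^ i * qn n (Y - 2 * i) /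
        (qfac n i * qfac n (M - i) * fall n (Y - i) (M + 1)) = if M = 0 then 1 else 0 := by
  rcases Nat.eq_zero_or_pos M with rfl | h
  · have := hY.qn_ne hn
    simp [qfac_zero, fall_succ, fall_zero, this]
  · obtain ⟨m, rfl⟩ : ∃ m, M = m + 1 := ⟨M - 1, by omega⟩
    rw [Finset.sum_range_succ, orth_partial hn (m + 1) hM Y hY m (by omega),
      if_neg (by omega), Nat.sub_self, show m + 1 - m - 1 = 0 by omega, qfac_zero,
      fall_succ' n (Y - ((m + 1 : ℕ) : ℂ)), qfac_succ, pow_succ]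
    have h1 := fall_ne hn (hY.shift (-m - 1) (y := Y - m - 1) (by push_cast; ring)) (m + 1)
    have h2 := (hY.shift (-m - 1) (y := Y - m - 1) (by push_cast; ring)).qn_ne hn
    have h3 := (hY.shift (-2 * m - 2) (y := Y - m - 1 - (m + 1)) (by push_cast; ring)).qn_ne hn
    have h4 := qfac_ne hn (k := m) (by omega)
    have h5 := qn_nat_ne hn (m := m + 1) (by omega) (by omega)
    have e : fall n (Y - ((m + 1 : ℕ) : ℂ) - 1) (m + 1) * qn n (Y - m - 1)
        = fall n (Y - m - 1) (m + 1) * qn n (Y - m - 1 - (m + 1)) := by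
      have := fall_succ n (Y - m - 1) (m + 1)
      rw [fall_succ'] at this
      push_cast at this ⊢
      rw [show Y - ((m : ℂ) + 1) - 1 = Y - m - 1 - 1 by ring]
      linear_combination this
    have h6 : fall n (Y - ((m + 1 : ℕ) : ℂ) - 1) (m + 1) ≠ 0 :=
      fall_ne hn (hY.shift (-m - 2) (by push_cast; ring)) (m + 1)
    push_cast at *
    rw [show Y - ((m : ℂ) + 1) = Y - m - 1 by ring] at *
    rw [show Y - 2 * ((m : ℂ) + 1) = Y - m - 1 - (m + 1) by ring]
    field_simp
    linear_combination (-1) ^ m * e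

/-! ### Quantum binomials -/

theorem qbin_eq {n : ℕ} (a b : ℂ) (k : ℕ) (hk : k < n) (h : a - b = k) :
    qbin n a b = fall n a k / qfac n k := by
  have hex : ∃ k : ℕ, k < n ∧ a - b = (k : ℂ) := ⟨k, hk, h⟩
  unfold qbin
  rw [dif_pos hex]
  have hc : hex.choose = k := by
    have := hex.choose_spec.2.symm.trans h
    exact_mod_cast this
  rw [hc, Finset.prod_div_distrib, h]
  have := fall_nat_self n k
  unfold fall at this
  rw [this]
  rfl

theorem qbin_none {n : ℕ} (a b : ℂ) (h : ∀ k : ℕ, k < n → a - b ≠ k) : qbin n a b = 0 := by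
  unfold qbin
  rw [dif_neg]
  rintro ⟨k, hk, h'⟩
  exact h k hk h'

theorem qbin_nat {n : ℕ} (hn : 2 ≤ n) (k m : ℕ) (hk : k + m < n) :
    qbin n ((k + m : ℕ) : ℂ) (k : ℂ) = qfac n (k + m) / (qfac n k * qfac n m) := by
  rw [qbin_eq _ _ m (by omega) (by push_cast; ring), ← fall_nat n k m]
  have := qfac_ne hn (k := k) (by omega)
  have := qfac_ne hn (k := m) (by omega)
  field_simp

theorem natIdx_eq (x : ℂ) (k : ℕ) (h : x = k) : natIdx x = k := by
  have hex : ∃ k : ℕ, x = (k : ℂ) := ⟨k, h⟩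
  unfold natIdx
  rw [dif_pos hex]
  have := hex.choose_spec.symm.trans h
  exact_mod_cast this

/-- The normalisation factor `[x ¦ x-(n-1-k)]`. -/
def Bn (n k : ℕ) (x : ℂ) : ℂ := fall n x (n - 1 - k) / qfac n (n - 1 - k)

theorem Bn_succ {n : ℕ} (hn : 2 ≤ n) (k : ℕ) (hk : k + 1 < n) (x : ℂ) :
    Bn n (k + 1) x * qn n (x + 2 + k) = - (Bn n k x * qn n ((k : ℂ) + 1)) := by
  unfold Bn
  obtain ⟨r, rfl⟩ : ∃ r, n = k + 2 + r := ⟨n - (k + 2), by omega⟩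
  rw [show k + 2 + r - 1 - k = r + 1 by omega, show k + 2 + r - 1 - (k + 1) = r by omega,
    fall_succ, qfac_succ]
  have h1 := qn_n_sub (k + 2 + r) hn (r + 1)
  have h2 := qn_add_n (k + 2 + r) hn (x - r)
  push_cast at h1 h2
  rw [show (k : ℂ) + 2 + r - (r + 1) = k + 1 by ring] at h1
  rw [show x - r + ((k : ℂ) + 2 + r) = x + 2 + k by ring] at h2
  rw [h1, h2]
  have h3 := qfac_ne hn (k := r) (by omega)
  have h4 := qn_nat_ne hn (m := r + 1) (by omega) (by omega)
  push_cast at h4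
  field_simp

theorem Bn_eq {n : ℕ} (hn : 2 ≤ n) (k : ℕ) (hk : k < n) (x : ℂ) (hx : NotInt x) :
    Bn n k x = Bn n 0 x * ((-1) ^ k * qfac n k / rise n (x + 2) k) := by
  induction k with
  | zero => simp [rise_zero, qfac_zero]
  | succ k ih =>
    have h := Bn_succ hn k hk x
    rw [ih (by omega)] at h
    have h1 := rise_ne hn (hx.shift 2 (y := x + 2) (by norm_num)) k
    have h2 := (hx.shift (2 + k) (y := x + 2 + k) (by push_cast; ring)).qn_ne hn
    rw [rise_succ, qfac_succ, pow_succ]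
    field_simp
    field_simp at h
    linear_combination h

theorem Bn_ne {n : ℕ} (hn : 2 ≤ n) (k : ℕ) (x : ℂ) (hx : NotInt x) :
    Bn n k x ≠ 0 :=
  div_ne_zero (fall_ne hn hx _) (qfac_ne hn (by omega))

theorem fall_add_n {n : ℕ} (hn : 2 ≤ n) (x : ℂ) (m : ℕ) :
    fall n (x + n) m = (-1) ^ m * fall n x m := by
  induction m with
  | zero => simp [fall_zero]
  | succ m ih =>
    rw [fall_succ, fall_succ, ih, show x + n - m = x - m + n by ring, qn_add_n n hn]
    ring

/-! ### The slice identity -/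

/-- The 6j-sum, in normalised form. -/
def U1 (n k1 k2 j : ℕ) (al be de : ℂ) : ℂ :=
  qfac n k1 * qfac n (k1 + k2 - j) * ∑ y ∈ Finset.range (j + 1),
    if y ≤ k2 ∧ j ≤ k1 + y then
      (-1) ^ y * fall n (al + be + de - 2 * k1 - k2 + 1) y * fall n (al - k1 + j - y) (k2 - y) *
        fall n (be - j + y) y * fall n (de - y) (j - y) /
        (qfac n (k1 + y - j) * qfac n (k2 - y) * qfac n y * qfac n (j - y))
    else 0

/-- The transformed 6j-sum. -/
def U2 (n k1 k2 j : ℕ) (al be de : ℂ) : ℂ :=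
  ∑ k ∈ Finset.range (j + 1),
    if k ≤ k2 then
      (-1) ^ k * qfac n (k1 + k2 - k) * fall n (be + de + 1 - j) k *
        fall n (al + be - 2 * k1 - k2 + k) k * fall n (de - k) (j - k) * fall n (al - k1) (k2 - k) /
        (qfac n k * qfac n (j - k) * qfac n (k2 - k))
    else 0

theorem U_eq {n : ℕ} (hn : 2 ≤ n) (k1 k2 j : ℕ) (al be de : ℂ) (hal : NotInt al)
    (h1 : k1 < n) (h2 : k2 < n) (hj : j < n) (hjK : j ≤ k1 + k2) :
    U1 n k1 k2 j al be de = U2 n k1 k2 j al be de := by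
  have hs := sears hn (-(k2 : ℂ)) (be - j + 1) (-(al + be + de - 2 * k1 - k2 + 1)) (-de)
    (-(al - k1 + j)) (k1 - j + 1) j hj (by ring)
  have hH : qfac n k2 * fall n (al - k1 + j) j ≠ 0 :=
    mul_ne_zero (qfac_ne hn h2) (fall_ne hn (hal.shift (-k1 + j) (by push_cast; ring)) j)
  apply mul_right_cancel₀ hH
  unfold U1 U2
  rw [mul_assoc, Finset.sum_mul]
  have hL : ∀ y ∈ Finset.range (j + 1),
      (if y ≤ k2 ∧ j ≤ k1 + y then
      (-1) ^ y * fall n (al + be + de - 2 * k1 - k2 + 1) y * fall n (al - k1 + j - y) (k2 - y) *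
        fall n (be - j + y) y * fall n (de - y) (j - y) /
        (qfac n (k1 + y - j) * qfac n (k2 - y) * qfac n y * qfac n (j - y))
      else 0) * (qfac n k2 * fall n (al - k1 + j) j)
      = fall n (al - k1 + j) k2 / qfac n k1 *
       ((-1) ^ y * rise n (-(k2 : ℂ)) y * rise n (be - j + 1) y *
        rise n (-(al + be + de - 2 * k1 - k2 + 1)) y *
        rise n (-de + y) (j - y) * rise n (-(al - k1 + j) + y) (j - y) *
        rise n (k1 - j + 1 + y) (j - y) / (qfac n y * qfac n (j - y))) := by
    intro y hy
    have hy := Finset.mem_range.1 hy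
    obtain ⟨r, rfl⟩ : ∃ r, j = y + r := ⟨j - y, by omega⟩
    rw [Nat.add_sub_cancel_left]
    have e1 : rise n ((k1 : ℂ) - ((y + r : ℕ) : ℂ) + 1 + y) r = fall n (k1 : ℂ) r := by
      rw [rise_eq_fall]; congr 1; push_cast; ring
    rw [e1, rise_neg, rise_neg]
    by_cases c1 : y ≤ k2
    swap
    · rw [if_neg (by tauto), fall_nat_zero n k2 y (by omega)]; ring
    by_cases c2 : y + r ≤ k1 + y
    swap
    · rw [if_neg (by tauto), fall_nat_zero n k1 r (by omega)]; ring
    rw [if_pos ⟨c1, c2⟩]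
    obtain ⟨s, rfl⟩ : ∃ s, k2 = y + s := ⟨k2 - y, by omega⟩
    obtain ⟨q, rfl⟩ : ∃ q, k1 = q + r := ⟨k1 - r, by omega⟩
    rw [show q + r + y - (y + r) = q by omega, Nat.add_sub_cancel_left]
    have f1 := fall_nat n s y
    have f2 := fall_nat n q r
    rw [add_comm s y] at f1
    rw [show -de + (y : ℂ) = -(de - y) by ring, rise_neg,
      show -(al - ((q + r : ℕ) : ℂ) + ((y + r : ℕ) : ℂ)) + (y : ℂ)
        = -(al - ((q + r : ℕ) : ℂ) + ((y + r : ℕ) : ℂ) - y) by ring, rise_neg,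
      rise_eq_fall n (be - _ + 1),
      show be - ((y + r : ℕ) : ℂ) + 1 + y - 1 = be - ((y + r : ℕ) : ℂ) + y by ring,
      fall_add n (al - ((q + r : ℕ) : ℂ) + ((y + r : ℕ) : ℂ)) y r,
      fall_add n (al - ((q + r : ℕ) : ℂ) + ((y + r : ℕ) : ℂ)) y s]
    rw [← f1, ← f2]
    have g1 := qfac_ne hn (k := q) (by omega)
    have g2 := qfac_ne hn (k := s) (by omega)
    have g3 := qfac_ne hn (k := y) (by omega)
    have g4 := qfac_ne hn (k := r) (by omega)
    have g5 : fall n (((q + r : ℕ) : ℂ)) r ≠ 0 := by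
      intro h0
      rw [h0, zero_mul] at f2
      exact qfac_ne hn h1 f2.symm
    have sg : ((-1 : ℂ) ^ r) * (-1) ^ r = 1 := by rw [← mul_pow]; simp
    have sgy : ((-1 : ℂ) ^ y) * (-1) ^ y = 1 := by rw [← mul_pow]; simp
    field_simp
    simp only [pow_two, pow_succ, pow_zero, one_mul]
    generalize (-1 : ℂ) ^ r = er at *
    generalize (-1 : ℂ) ^ y = ey at *
    grind
  have hR : ∀ k ∈ Finset.range (j + 1),
      (if k ≤ k2 then
      (-1) ^ k * qfac n (k1 + k2 - k) * fall n (be + de + 1 - j) k *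
        fall n (al + be - 2 * k1 - k2 + k) k * fall n (de - k) (j - k) * fall n (al - k1) (k2 - k) /
        (qfac n k * qfac n (j - k) * qfac n (k2 - k))
      else 0) * (qfac n k2 * fall n (al - k1 + j) j)
      = qfac n (k1 + k2 - j) * fall n (al - k1 + j) k2 *
       ((-1) ^ k * rise n (-(k2 : ℂ)) k * rise n (-de - (be - j + 1)) k *
        rise n (-de - -(al + be + de - 2 * k1 - k2 + 1)) k *
        rise n (-de + k) (j - k) * rise n (-(al - k1 + j) - -(k2 : ℂ)) (j - k) *
        rise n (k1 - j + 1 - -(k2 : ℂ)) (j - k) / (qfac n k * qfac n (j - k))) := by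
    intro k hk
    have hk := Finset.mem_range.1 hk
    obtain ⟨r, rfl⟩ : ∃ r, j = k + r := ⟨j - k, by omega⟩
    rw [Nat.add_sub_cancel_left, rise_neg]
    by_cases c1 : k ≤ k2
    swap
    · rw [if_neg (by tauto), fall_nat_zero n k2 k (by omega)]; ring
    rw [if_pos c1]
    obtain ⟨s, rfl⟩ : ∃ s, k2 = k + s := ⟨k2 - k, by omega⟩
    obtain ⟨q, hq⟩ : ∃ q, k1 + s = q + r := ⟨k1 + s - r, by omega⟩
    have hqc : (k1 : ℂ) + s = q + r := by exact_mod_cast hq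
    rw [show k1 + (k + s) - (k + r) = q by omega, show k1 + (k + s) - k = q + r by omega,
      Nat.add_sub_cancel_left]
    have f1 := fall_nat n s k
    have f2 := fall_nat n q r
    rw [add_comm s k] at f1
    have e1 : rise n ((k1 : ℂ) - ((k + r : ℕ) : ℂ) + 1 - -((k + s : ℕ) : ℂ)) r
        = fall n ((q + r : ℕ) : ℂ) r := by
      rw [rise_eq_fall]; congr 1; push_cast; linear_combination hqc
    have e2 : rise n (-(al - k1 + ((k + r : ℕ) : ℂ)) - -((k + s : ℕ) : ℂ)) r
        = (-1) ^ r * fall n (al - k1 + ((k + r : ℕ) : ℂ) - ((k + s : ℕ) : ℂ)) r := by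
      rw [← rise_neg]; congr 1; ring
    have e3 : rise n (-de - (be - ((k + r : ℕ) : ℂ) + 1)) k
        = (-1) ^ k * fall n (be + de + 1 - ((k + r : ℕ) : ℂ)) k := by
      rw [← rise_neg]; congr 1; ring
    have e4 : rise n (-de - -(al + be + de - 2 * k1 - ((k + s : ℕ) : ℂ) + 1)) k
        = fall n (al + be - 2 * k1 - ((k + s : ℕ) : ℂ) + k) k := by
      rw [rise_eq_fall]; congr 1; ring
    have e5 : rise n (-de + (k : ℂ)) r = (-1) ^ r * fall n (de - k) r := by
      rw [← rise_neg]; congr 1; ring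
    have e6 : fall n (al - k1 + ((k + r : ℕ) : ℂ)) (k + s) *
        fall n (al - k1 + ((k + r : ℕ) : ℂ) - ((k + s : ℕ) : ℂ)) r
        = fall n (al - k1 + ((k + r : ℕ) : ℂ)) (k + r) * fall n (al - k1) s := by
      rw [← fall_add, show k + s + r = k + r + s by ring, fall_add, add_sub_cancel_right]
    rw [e1, e2, e3, e4, e5, ← f1, ← f2]
    have g2 := qfac_ne hn (k := s) (by omega)
    have g3 := qfac_ne hn (k := k) (by omega)
    have g4 := qfac_ne hn (k := r) (by omega)
    have sg : ((-1 : ℂ) ^ r) * (-1) ^ r = 1 := by rw [← mul_pow]; simp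
    have sgy : ((-1 : ℂ) ^ k) * (-1) ^ k = 1 := by rw [← mul_pow]; simp
    generalize (-1 : ℂ) ^ r = er at *
    generalize (-1 : ℂ) ^ k = ey at *
    generalize fall n (al - k1 + ((k + r : ℕ) : ℂ)) (k + s) = z1 at *
    generalize fall n (al - k1 + ((k + r : ℕ) : ℂ) - ((k + s : ℕ) : ℂ)) r = z2 at *
    generalize fall n (al - k1 + ((k + r : ℕ) : ℂ)) (k + r) = z3 at *
    generalize fall n (al - k1) s = z4 at *
    field_simp
    grind
  rw [Finset.sum_congr rfl hL, ← Finset.mul_sum, hs, Finset.sum_mul, Finset.sum_congr rfl hR,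
    ← Finset.mul_sum]
  have := qfac_ne hn h1
  field_simp

theorem slice {n : ℕ} (hn : 2 ≤ n) (k1 k2 u w : ℕ) (al be de : ℂ)
    (hX : NotInt (be + de)) (hu : u < n) (hw : w < n) (huw : u + w = k1 + k2) (h2 : k2 < n) :
    ∑ j ∈ Finset.range (w + 1), (-1) ^ j * qn n (be + de + 1 - 2 * j) /
        fall n (be + de + 1 - j) (w + 1) * fall n (de - j) (w - j) / (qfac n u * qfac n (w - j)) *
        U2 n k1 k2 j al be de
      = if w ≤ k2 then fall n (al + be - 2 * k1 - k2 + w) w * fall n (al - k1) (k2 - w) /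
          (qfac n (k2 - w) * qfac n w) else 0 := by
  unfold U2
  simp only [Finset.mul_sum]
  rw [sum_swap]
  have hk : ∀ k ∈ Finset.range (w + 1),
     (∑ i ∈ Finset.range (w - k + 1), (-1) ^ (k + i) * qn n (be + de + 1 - 2 * ((k + i : ℕ) : ℂ)) /
        fall n (be + de + 1 - ((k + i : ℕ) : ℂ)) (w + 1) * fall n (de - ((k + i : ℕ) : ℂ)) (w - (k + i)) /
        (qfac n u * qfac n (w - (k + i))) *
        (if k ≤ k2 then
      (-1) ^ k * qfac n (k1 + k2 - k) * fall n (be + de + 1 - ((k + i : ℕ) : ℂ)) k *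
        fall n (al + be - 2 * k1 - k2 + k) k * fall n (de - k) (k + i - k) *
          fall n (al - k1) (k2 - k) /
        (qfac n k * qfac n (k + i - k) * qfac n (k2 - k))
      else 0)) = if k = w then
        (if w ≤ k2 then fall n (al + be - 2 * k1 - k2 + w) w * fall n (al - k1) (k2 - w) /
          (qfac n (k2 - w) * qfac n w) else 0) else 0 := by
    intro k hk
    have hk := Finset.mem_range.1 hk
    by_cases c1 : k ≤ k2
    swap
    · simp only [if_neg c1, mul_zero, Finset.sum_const_zero]
      split_ifs <;> first | rfl | omega
    simp only [if_pos c1]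
    have ho := orth hn (w - k) (by omega) (be + de + 1 - 2 * k)
      (hX.shift (1 - 2 * k) (by push_cast; ring))
    have hi : ∀ i ∈ Finset.range (w - k + 1),
      (-1) ^ (k + i) * qn n (be + de + 1 - 2 * ((k + i : ℕ) : ℂ)) /
        fall n (be + de + 1 - ((k + i : ℕ) : ℂ)) (w + 1) * fall n (de - ((k + i : ℕ) : ℂ)) (w - (k + i)) /
        (qfac n u * qfac n (w - (k + i))) *
      ((-1) ^ k * qfac n (k1 + k2 - k) * fall n (be + de + 1 - ((k + i : ℕ) : ℂ)) k *
        fall n (al + be - 2 * k1 - k2 + k) k * fall n (de - k) (k + i - k) *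
          fall n (al - k1) (k2 - k) /
        (qfac n k * qfac n (k + i - k) * qfac n (k2 - k)))
      = (qfac n (k1 + k2 - k) * fall n (al + be - 2 * k1 - k2 + k) k * fall n (al - k1) (k2 - k) *
          fall n (de - k) (w - k) / (qfac n u * qfac n k * qfac n (k2 - k))) *
        ((-1) ^ i * qn n (be + de + 1 - 2 * k - 2 * i) /
        (qfac n i * qfac n (w - k - i) * fall n (be + de + 1 - 2 * k - i) (w - k + 1))) := by
      intro i hi
      have hi := Finset.mem_range.1 hi
      obtain ⟨r, rfl⟩ : ∃ r, w = k + i + r := ⟨w - (k + i), by omega⟩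
      rw [show k + i + r - (k + i) = r by omega, show k + i - k = i by omega,
        show k + i + r - k = i + r by omega, show i + r - i = r by omega]
      have hN : NotInt (be + de + 1 - ((k + i : ℕ) : ℂ)) :=
        hX.shift (1 - (k + i)) (by push_cast; ring)
      have hN2 : NotInt (be + de + 1 - 2 * k - i) :=
        hX.shift (1 - 2 * k - i) (by push_cast; ring)
      rw [show k + i + r + 1 = k + (i + r + 1) by ring, fall_add n (be + de + 1 - _), fall_add n (de - k)]
      have a1 : be + de + 1 - ((k + i : ℕ) : ℂ) - k = be + de + 1 - 2 * k - i := by push_cast; ring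
      have a2 : be + de + 1 - 2 * ((k + i : ℕ) : ℂ) = be + de + 1 - 2 * k - 2 * i := by
        push_cast; ring
      have a3 : de - ((k + i : ℕ) : ℂ) = de - k - i := by push_cast; ring
      rw [a1, a2, a3]
      have := fall_ne hn hN k
      have := fall_ne hn hN2 (i + r + 1)
      have sgy : ((-1 : ℂ) ^ k) * (-1) ^ k = 1 := by rw [← mul_pow]; simp
      rw [pow_add]
      generalize (-1 : ℂ) ^ k = ey at *
      have g1 := qfac_ne hn hu
      have g2 := qfac_ne hn (k := i) (by omega)
      have g3 := qfac_ne hn (k := r) (by omega)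
      have g4 := qfac_ne hn (k := k) (by omega)
      have g5 := qfac_ne hn (k := k2 - k) (by omega)
      field_simp
      rw [pow_two, sgy]
      ring
    rw [Finset.sum_congr rfl hi, ← Finset.mul_sum, ho]
    by_cases c2 : k = w
    · subst c2
      rw [if_pos (by omega), if_pos rfl, if_pos c1, show k1 + k2 - k = u by omega, Nat.sub_self,
        fall_zero]
      have g1 := qfac_ne hn hu
      field_simp
    · rw [if_neg (by omega), if_neg c2, mul_zero]
  rw [Finset.sum_congr rfl hk, Finset.sum_ite_eq' (Finset.range (w + 1)) w, if_pos (Finset.self_mem_range_succ w)]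

/-! ### The quantum group action -/

/-- The operator `E` up to normalisation. -/
def Em (n : ℕ) : Matrix (Fin n) (Fin n) ℂ :=
  Matrix.of fun i j => if (j : ℕ) = (i : ℕ) + 1 then qn n ((j : ℕ) : ℂ) else 0

/-- The operator `F` up to normalisation. -/
def Fm (n : ℕ) (a : ℂ) : Matrix (Fin n) (Fin n) ℂ :=
  Matrix.of fun i j => if (i : ℕ) = (j : ℕ) + 1 then qn n (2 * a - ((j : ℕ) : ℂ)) else 0

/-- The operator `K`. -/
def Km (n : ℕ) (a : ℂ) : Matrix (Fin n) (Fin n) ℂ :=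
  Matrix.diagonal fun i => xic n (a - ((i : ℕ) : ℂ))

/-- The operator `K⁻¹`. -/
def Ki (n : ℕ) (a : ℂ) : Matrix (Fin n) (Fin n) ℂ :=
  Matrix.diagonal fun i => xic n (-(a - ((i : ℕ) : ℂ)))

theorem sum_up {n : ℕ} (i : Fin n) (f : Fin n → ℂ) :
    (∑ j : Fin n, if (j : ℕ) = (i : ℕ) + 1 then f j else 0)
      = if h : (i : ℕ) + 1 < n then f ⟨(i : ℕ) + 1, h⟩ else 0 := by
  split_ifs with h
  · rw [Finset.sum_eq_single ⟨(i : ℕ) + 1, h⟩]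
    · simp
    · intro j _ hj
      rw [if_neg]
      intro hh
      exact hj (Fin.ext hh)
    · simp
  · apply Finset.sum_eq_zero
    intro j _
    rw [if_neg]
    have := j.2
    omega

theorem sum_down {n : ℕ} (i : Fin n) (f : Fin n → ℂ) :
    (∑ j : Fin n, if (i : ℕ) = (j : ℕ) + 1 then f j else 0)
      = if 0 < (i : ℕ) then f ⟨(i : ℕ) - 1, by have := i.2; omega⟩ else 0 := by
  split_ifs with h
  · rw [Finset.sum_eq_single ⟨(i : ℕ) - 1, by have := i.2; omega⟩]
    · rw [if_pos]
      simp only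
      omega
    · intro j _ hj
      rw [if_neg]
      intro hh
      exact hj (Fin.ext (by simp only; omega))
    · simp
  · apply Finset.sum_eq_zero
    intro j _
    rw [if_neg]
    omega

theorem Em_mul {n : ℕ} {ι : Type*} (M : Matrix (Fin n) ι ℂ) (i : Fin n) (q : ι) :
    (Em n * M) i q = if h : (i : ℕ) + 1 < n then
      qn n ((i : ℕ) + 1) * M ⟨(i : ℕ) + 1, h⟩ q else 0 := by
  have := sum_up i (fun j => qn n ((j : ℕ) : ℂ) * M j q)
  simp only [Matrix.mul_apply, Em, Matrix.of_apply, ite_mul, zero_mul]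
  rw [this]
  simp

theorem Fm_mul {n : ℕ} {ι : Type*} (a : ℂ) (M : Matrix (Fin n) ι ℂ) (i : Fin n) (q : ι) :
    (Fm n a * M) i q = if 0 < (i : ℕ) then
      qn n (2 * a - i + 1) * M ⟨(i : ℕ) - 1, by have := i.2; omega⟩ q else 0 := by
  have := sum_down i (fun j => qn n (2 * a - ((j : ℕ) : ℂ)) * M j q)
  simp only [Matrix.mul_apply, Fm, Matrix.of_apply, ite_mul, zero_mul]
  rw [this]
  split_ifs with h
  · congr 2
    simp only [Nat.cast_sub (show 1 ≤ (i : ℕ) from h)]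
    push_cast
    ring
  · rfl

theorem mul_Fm {n : ℕ} {ι : Type*} (c : ℂ) (M : Matrix ι (Fin n) ℂ) (p : ι) (t : Fin n) :
    (M * Fm n c) p t = if h : (t : ℕ) + 1 < n then
      M p ⟨(t : ℕ) + 1, h⟩ * qn n (2 * c - t) else 0 := by
  have := sum_up t (fun j => M p j * qn n (2 * c - ((t : ℕ) : ℂ)))
  simp only [Matrix.mul_apply, Fm, Matrix.of_apply, mul_ite, mul_zero]
  rw [this]

theorem mul_Em {n : ℕ} {ι : Type*} (M : Matrix ι (Fin n) ℂ) (p : ι) (t : Fin n) :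
    (M * Em n) p t = if 0 < (t : ℕ) then
      M p ⟨(t : ℕ) - 1, by have := t.2; omega⟩ * qn n t else 0 := by
  have := sum_down t (fun j => M p j * qn n ((t : ℕ) : ℂ))
  simp only [Matrix.mul_apply, Em, Matrix.of_apply, mul_ite, mul_zero]
  rw [this]

theorem Km_Em (n : ℕ) (a : ℂ) : Km n a * Em n = xic n 1 • (Em n * Km n a) := by
  ext i j
  simp only [Km, Matrix.diagonal_mul, Matrix.mul_diagonal, Matrix.smul_apply, smul_eq_mul, Em,
    Matrix.of_apply]
  split_ifs with h
  · rw [show a - ((i : ℕ) : ℂ) = (a - ((j : ℕ) : ℂ)) + 1 by rw [h]; push_cast; ring, xic_add]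
    ring
  · simp

theorem Ki_Em (n : ℕ) (a : ℂ) : Em n * Ki n a = xic n 1 • (Ki n a * Em n) := by
  ext i j
  simp only [Ki, Matrix.diagonal_mul, Matrix.mul_diagonal, Matrix.smul_apply, smul_eq_mul, Em,
    Matrix.of_apply]
  split_ifs with h
  · rw [show -(a - ((j : ℕ) : ℂ)) = -(a - ((i : ℕ) : ℂ)) + 1 by rw [h]; push_cast; ring, xic_add]
    ring
  · simp

theorem Km_Fm (n : ℕ) (a b : ℂ) : Fm n b * Km n a = xic n 1 • (Km n a * Fm n b) := by
  ext i j
  simp only [Km, Matrix.diagonal_mul, Matrix.mul_diagonal, Matrix.smul_apply, smul_eq_mul, Fm,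
    Matrix.of_apply]
  split_ifs with h
  · rw [show (a - ((j : ℕ) : ℂ)) = (a - ((i : ℕ) : ℂ)) + 1 by rw [h]; push_cast; ring, xic_add]
    ring
  · simp

theorem Ki_Fm (n : ℕ) (a b : ℂ) : Ki n a * Fm n b = xic n 1 • (Fm n b * Ki n a) := by
  ext i j
  simp only [Ki, Matrix.diagonal_mul, Matrix.mul_diagonal, Matrix.smul_apply, smul_eq_mul, Fm,
    Matrix.of_apply]
  split_ifs with h
  · rw [show -(a - ((i : ℕ) : ℂ)) = -(a - ((j : ℕ) : ℂ)) + 1 by rw [h]; push_cast; ring, xic_add]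
    ring
  · simp

theorem qn_comm_aux (n : ℕ) (x j : ℂ) :
    qn n (x - j) * qn n (j + 1) - qn n j * qn n (x - j + 1) = qn n 1 * qn n (x - 2 * j) := by
  rw [qn_mul, qn_mul, qn_mul, ← qc_neg n (j - _)]
  rw [← qc_neg n (1 - _)]
  ring_nf

theorem Em_Fm {n : ℕ} (hn : 2 ≤ n) (a : ℂ) :
    Em n * Fm n a - Fm n a * Em n = qn n 1 • (Km n a * Km n a - Ki n a * Ki n a) := by
  ext i j
  have hq := qn_comm_aux n (2 * a) (j : ℕ)
  have hk : (Km n a * Km n a - Ki n a * Ki n a) i j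
      = if i = j then qn n (2 * a - 2 * (j : ℕ)) else 0 := by
    simp only [Km, Ki, Matrix.diagonal_mul_diagonal, Matrix.sub_apply, Matrix.diagonal_apply]
    split_ifs with h
    · subst h
      rw [← xic_add, ← xic_add, qn]
      ring_nf
    · simp
  rw [Matrix.smul_apply, hk, Matrix.sub_apply, Em_mul, Fm_mul]
  simp only [Fm, Em, Matrix.of_apply]
  by_cases h : i = j
  · subst h
    rw [if_pos rfl, smul_eq_mul, ← hq]
    have h1 : (if h : (i : ℕ) + 1 < n then
      qn n ((i : ℕ) + 1) * (if (i : ℕ) + 1 = (i : ℕ) + 1 then qn n (2 * a - (i : ℕ)) else 0) else 0)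
       = qn n (2 * a - (i : ℕ)) * qn n ((i : ℕ) + 1) := by
      rw [if_pos rfl]
      split_ifs with h
      · ring
      · have : (i : ℕ) + 1 = n := by have := i.2; omega
        have h2 : ((i : ℕ) : ℂ) + 1 = n := by exact_mod_cast this
        rw [h2, qn_n n hn, mul_zero]
    rw [h1]
    congr 1
    by_cases h0 : 0 < (i : ℕ)
    · rw [if_pos h0, if_pos (by omega)]
      ring
    · rw [if_neg h0, show (i : ℕ) = 0 by omega]
      simp [qn_zero]
  · have h' : (i : ℕ) ≠ j := fun hh => h (Fin.ext hh)
    rw [if_neg h, smul_zero]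
    have e1 : ∀ x : ℂ, (if (i : ℕ) + 1 = (j : ℕ) + 1 then x else 0) = 0 := by
      intro x; rw [if_neg]; omega
    have e2 : (if 0 < (i : ℕ) then qn n (2 * a - (i : ℕ) + 1) *
      (if (j : ℕ) = (i : ℕ) - 1 + 1 then qn n ((j : ℕ) : ℂ) else 0) else 0) = 0 := by
      split_ifs <;> first | omega | simp
    simp only [e1, mul_zero, dite_eq_ite, ite_self, e2, sub_zero]

/-- Coproduct of `F`. -/
def DF (n : ℕ) (a b : ℂ) : Matrix (Fin n × Fin n) (Fin n × Fin n) ℂ :=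
  Fm n a ⊗ₖ Km n b + Ki n a ⊗ₖ Fm n b

/-- Coproduct of `E`. -/
def DE (n : ℕ) (a b : ℂ) : Matrix (Fin n × Fin n) (Fin n × Fin n) ℂ :=
  Em n ⊗ₖ Km n b + Ki n a ⊗ₖ Em n

theorem DE_DF {n : ℕ} (hn : 2 ≤ n) (a b : ℂ) :
    DE n a b * DF n a b - DF n a b * DE n a b
      = qn n 1 • ((Km n a ⊗ₖ Km n b) * (Km n a ⊗ₖ Km n b)
        - (Ki n a ⊗ₖ Ki n b) * (Ki n a ⊗ₖ Ki n b)) := by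
  have ea := Em_Fm hn a
  have eb := Em_Fm hn b
  have hx := xic_ne n 1
  have c1 : (Ki n a * Em n) ⊗ₖ (Fm n b * Km n b) = (Em n * Ki n a) ⊗ₖ (Km n b * Fm n b) := by
    rw [Ki_Em, Km_Fm, Matrix.kronecker_smul, Matrix.smul_kronecker]
  have c2 : (Fm n a * Ki n a) ⊗ₖ (Km n b * Em n) = (Ki n a * Fm n a) ⊗ₖ (Em n * Km n b) := by
    rw [Ki_Fm, Km_Em, Matrix.kronecker_smul, Matrix.smul_kronecker]
  unfold DE DF
  simp only [mul_add, add_mul, ← Matrix.mul_kronecker_mul]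
  rw [c1, c2]
  have ea' : Em n * Fm n a = Fm n a * Em n + qn n 1 • (Km n a * Km n a - Ki n a * Ki n a) := by
    rw [← ea]; abel
  have eb' : Em n * Fm n b = Fm n b * Em n + qn n 1 • (Km n b * Km n b - Ki n b * Ki n b) := by
    rw [← eb]; abel
  rw [ea', eb']
  ext p q
  simp only [Matrix.add_apply, Matrix.sub_apply, Matrix.smul_apply, Matrix.kroneckerMap_apply,
    smul_eq_mul]
  ring

theorem col_zero {n : ℕ} (hn : 2 ≤ n) {ι : Type*} [Fintype ι] (c : ℂ) (hc : NotInt (2 * c))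
    (D : Matrix ι (Fin n) ℂ) (G : Matrix ι ι ℂ) (h : D * Fm n c = G * D)
    (h0 : ∀ p, D p ⟨0, by omega⟩ = 0) : D = 0 := by
  have key : ∀ t : ℕ, ∀ ht : t < n, ∀ p, D p ⟨t, ht⟩ = 0 := by
    intro t
    induction t with
    | zero => intro _ p; exact h0 p
    | succ t ih =>
      intro ht p
      have h1 := congrFun (congrFun h p) ⟨t, by omega⟩
      rw [mul_Fm, dif_pos ht, Matrix.mul_apply] at h1
      simp only [ih, mul_zero, Finset.sum_const_zero] at h1
      rcases mul_eq_zero.1 h1 with h2 | h2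
      · exact h2
      · exact absurd h2 (NotInt.qn_ne hn (hc.shift (-t) (by push_cast; ring)))
  ext p t
  exact key t t.2 p

/-! ### Clebsch-Gordan coefficients -/

/-- Elementary term of the Clebsch-Gordan sum. -/
def Tm (n : ℕ) (a b : ℂ) (x y z m : ℕ) : ℂ :=
  (-1) ^ (y + m) * (-1) ^ z *
  xic n ((((y : ℂ) + m) * (2 * b - (y + m) + 1) - ((x : ℂ) + z) * (2 * a - (x + z) + 1)) / 2
    + ((z : ℂ) - m) * (2 * (a + b - x - y) - z - m + 1) / 2) *
  (fall n (2 * a - x) z / qfac n z) * (fall n (2 * b - y) m / qfac n m)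

theorem Tm_rec {n : ℕ} (hn : 2 ≤ n) (a b : ℂ) (x y z m : ℕ) (hz : z < n) (hm : m < n) :
    qn n ((z : ℂ) + m) * Tm n a b x y z m
      + (if 0 < z then xic n (b - y - m) * qn n (2 * a - x - z + 1) * Tm n a b x y (z - 1) m else 0)
      + (if 0 < m then xic n (-(a - x - z)) * qn n (2 * b - y - m + 1) * Tm n a b x y z (m - 1)
          else 0) = 0 := by
  have h1 : (if 0 < z then xic n (b - y - m) * qn n (2 * a - x - z + 1) * Tm n a b x y (z - 1) m
      else 0) = - (xic n (-m) * qn n z * Tm n a b x y z m) := by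
    rcases z with _ | z
    · simp [qn_zero]
    · rw [if_pos (Nat.succ_pos z), Nat.add_sub_cancel]
      unfold Tm
      rw [fall_succ, qfac_succ]
      have e1 : xic n ((((y : ℂ) + m) * (2 * b - (y + m) + 1) - ((x : ℂ) + z) * (2 * a - (x + z) + 1)) / 2
    + ((z : ℂ) - m) * (2 * (a + b - x - y) - z - m + 1) / 2) * xic n (b - y - m) =
        xic n (-m) * xic n ((((y : ℂ) + m) * (2 * b - (y + m) + 1) - ((x : ℂ) + (z + 1 : ℕ)) * (2 * a - (x + (z + 1 : ℕ)) + 1)) / 2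
    + (((z + 1 : ℕ) : ℂ) - m) * (2 * (a + b - x - y) - (z + 1 : ℕ) - m + 1) / 2) := by
        rw [← xic_add, ← xic_add]
        congr 1
        push_cast
        ring
      have e2 : qn n (2 * a - x - (z + 1 : ℕ) + 1) = qn n (2 * a - x - z) := by
        congr 1; push_cast; ring
      have e3 : qn n ((z + 1 : ℕ) : ℂ) = qn n ((z : ℂ) + 1) := by push_cast; rfl
      have hne : qn n ((z : ℂ) + 1) ≠ 0 := by
        rw [← e3]; exact qn_nat_ne hn (by omega) hz
      have := qfac_ne hn (k := z) (by omega)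
      have := qfac_ne hn (k := m) (by omega)
      rw [e2, e3, pow_succ (-1 : ℂ) z]
      rw [show ∀ A B C D E F G : ℂ, A * B * (C * D * E * F * G) = (E * A) * (B * C * D * F * G) by
        intros; ring, e1]
      field_simp
  have h2 : (if 0 < m then xic n (-(a - x - z)) * qn n (2 * b - y - m + 1) * Tm n a b x y z (m - 1)
          else 0) = - (xic n z * qn n m * Tm n a b x y z m) := by
    rcases m with _ | m
    · simp [qn_zero]
    · rw [if_pos (Nat.succ_pos m), Nat.add_sub_cancel]
      unfold Tm
      rw [fall_succ, qfac_succ]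
      have e1 : xic n ((((y : ℂ) + m) * (2 * b - (y + m) + 1) - ((x : ℂ) + z) * (2 * a - (x + z) + 1)) / 2
    + ((z : ℂ) - m) * (2 * (a + b - x - y) - z - m + 1) / 2) * xic n (-(a - x - z)) =
        xic n z * xic n ((((y : ℂ) + (m + 1 : ℕ)) * (2 * b - (y + (m + 1 : ℕ)) + 1) - ((x : ℂ) + z) * (2 * a - (x + z) + 1)) / 2
    + ((z : ℂ) - (m + 1 : ℕ)) * (2 * (a + b - x - y) - z - (m + 1 : ℕ) + 1) / 2) := by
        rw [← xic_add, ← xic_add]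
        congr 1
        push_cast
        ring
      have e2 : qn n (2 * b - y - (m + 1 : ℕ) + 1) = qn n (2 * b - y - m) := by
        congr 1; push_cast; ring
      have e3 : qn n ((m + 1 : ℕ) : ℂ) = qn n ((m : ℂ) + 1) := by push_cast; rfl
      have hne : qn n ((m : ℂ) + 1) ≠ 0 := by
        rw [← e3]; exact qn_nat_ne hn (by omega) hm
      have := qfac_ne hn (k := z) (by omega)
      have := qfac_ne hn (k := m) (by omega)
      rw [e2, e3, ← add_assoc, pow_succ (-1 : ℂ) (y + m)]
      rw [show ∀ A B C D E F G : ℂ, A * B * (C * D * E * F * G) = (E * A) * (B * C * D * F * G) by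
        intros; ring, e1]
      field_simp
  rw [h1, h2, qn_add]
  ring

/-- The `u,v`-part of the Clebsch-Gordan coefficient. -/
def Wc (n : ℕ) (a b : ℂ) (k u v : ℕ) : ℂ :=
  ∑ x ∈ Finset.range (k + 1), if x ≤ u ∧ k - x ≤ v then
    qfac n k / (qfac n x * qfac n (k - x)) * Tm n a b x (k - x) (u - x) (v - (k - x)) else 0

theorem Wc_rec {n : ℕ} (hn : 2 ≤ n) (a b : ℂ) (k u v : ℕ) (hu : u < n) (hv : v < n) :
    qn n ((u : ℂ) + v - k) * Wc n a b k u v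
      + (if 0 < u then xic n (b - v) * qn n (2 * a - u + 1) * Wc n a b k (u - 1) v else 0)
      + (if 0 < v then xic n (-(a - u)) * qn n (2 * b - v + 1) * Wc n a b k u (v - 1)
          else 0) = 0 := by
  have e1 : ∀ (P : Prop) [Decidable P] (A : ℂ) (f : ℕ → ℂ) (s : Finset ℕ),
      (if P then A * ∑ x ∈ s, f x else 0) = ∑ x ∈ s, if P then A * f x else 0 := by
    intro P _ A f s
    split_ifs
    · rw [Finset.mul_sum]
    · simp
  unfold Wc
  rw [e1, e1, Finset.mul_sum, ← Finset.sum_add_distrib, ← Finset.sum_add_distrib]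
  apply Finset.sum_eq_zero
  intro x hx
  have hxk : x ≤ k := by simpa [Nat.lt_succ_iff] using hx
  by_cases hc : x ≤ u ∧ k - x ≤ v
  · obtain ⟨y, rfl⟩ := Nat.exists_eq_add_of_le hxk
    rw [Nat.add_sub_cancel_left] at *
    obtain ⟨h1, h2⟩ := hc
    obtain ⟨z, rfl⟩ := Nat.exists_eq_add_of_le h1
    obtain ⟨m, rfl⟩ := Nat.exists_eq_add_of_le h2
    have hr := Tm_rec hn a b x y z m (by omega) (by omega)
    rw [if_pos ⟨h1, h2⟩]
    have f1 : (if 0 < x + z then xic n (b - (y + m : ℕ)) * qn n (2 * a - (x + z : ℕ) + 1) *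
       (if x ≤ x + z - 1 ∧ y ≤ y + m then qfac n (x + y) / (qfac n x * qfac n y) *
         Tm n a b x y (x + z - 1 - x) (y + m - y) else 0) else 0)
       = qfac n (x + y) / (qfac n x * qfac n y) * (if 0 < z then xic n (b - y - m) *
         qn n (2 * a - x - z + 1) * Tm n a b x y (z - 1) m else 0) := by
      by_cases hz : 0 < z
      · rw [if_pos (by omega), if_pos (by omega), if_pos hz, show x + z - 1 - x = z - 1 by omega,
          show y + m - y = m by omega]
        push_cast
        ring_nf
      · rw [if_neg hz, mul_zero]
        by_cases hx : 0 < x + z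
        · rw [if_pos hx, if_neg (by omega), mul_zero]
        · rw [if_neg hx]
    have f2 : (if 0 < y + m then xic n (-(a - (x + z : ℕ))) * qn n (2 * b - (y + m : ℕ) + 1) *
       (if x ≤ x + z ∧ y ≤ y + m - 1 then qfac n (x + y) / (qfac n x * qfac n y) *
         Tm n a b x y (x + z - x) (y + m - 1 - y) else 0) else 0)
       = qfac n (x + y) / (qfac n x * qfac n y) * (if 0 < m then xic n (-(a - x - z)) *
         qn n (2 * b - y - m + 1) * Tm n a b x y z (m - 1) else 0) := by
      by_cases hz : 0 < m
      · rw [if_pos (by omega), if_pos (by omega), if_pos hz, show y + m - 1 - y = m - 1 by omega,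
          show x + z - x = z by omega]
        push_cast
        ring_nf
      · rw [if_neg hz, mul_zero]
        by_cases hx : 0 < y + m
        · rw [if_pos hx, if_neg (by omega), mul_zero]
        · rw [if_neg hx]
    rw [f1, f2, show x + z - x = z by omega, show y + m - y = m by omega]
    have f3 : ((x + z : ℕ) : ℂ) + (y + m : ℕ) - (x + y : ℕ) = (z : ℂ) + m := by push_cast; ring
    rw [f3]
    linear_combination (qfac n (x + y) / (qfac n x * qfac n y)) * hr
  · rw [if_neg hc, if_neg (show ¬ (x ≤ u - 1 ∧ k - x ≤ v) by omega),
      if_neg (show ¬ (x ≤ u ∧ k - x ≤ v - 1) by omega)]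
    simp

theorem Wc_zero (n : ℕ) (a b : ℂ) (k u v : ℕ) (h : u + v = k) :
    Wc n a b k u v = qfac n k / (qfac n u * qfac n v) * ((-1) ^ v *
      xic n (((v : ℂ) * (2 * b - v + 1) - u * (2 * a - u + 1)) / 2)) := by
  unfold Wc
  rw [Finset.sum_eq_single u]
  · rw [if_pos (by omega), show k - u = v by omega]
    unfold Tm
    simp [fall_zero, qfac_zero]
  · intro x hx hxu
    have : x < k + 1 := by simpa using hx
    rw [if_neg (by omega)]
  · intro hx
    exfalso
    apply hx
    simp
    omega

theorem Wc_zero_rec {n : ℕ} (hn : 2 ≤ n) (a b : ℂ) (k u v : ℕ) (h : u + v + 1 = k) (hk : k < n) :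
    qn n ((u : ℂ) + 1) * xic n (b - v) * Wc n a b k (u + 1) v +
     xic n (-(a - u)) * qn n ((v : ℂ) + 1) * Wc n a b k u (v + 1) = 0 := by
  rw [Wc_zero n a b k (u + 1) v (by omega), Wc_zero n a b k u (v + 1) (by omega), qfac_succ,
    qfac_succ]
  have g1 := qfac_ne hn (k := u) (by omega)
  have g2 := qfac_ne hn (k := v) (by omega)
  have g3 : qn n ((u : ℂ) + 1) ≠ 0 := by exact_mod_cast qn_nat_ne hn (m := u + 1) (by omega) (by omega)
  have g4 : qn n ((v : ℂ) + 1) ≠ 0 := by exact_mod_cast qn_nat_ne hn (m := v + 1) (by omega) (by omega)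
  have e1 : xic n (b - v) * xic n (((v : ℂ) * (2 * b - v + 1) - (u + 1 : ℕ) * (2 * a - (u + 1 : ℕ) + 1)) / 2)
    = xic n (-(a - u)) * xic n ((((v + 1 : ℕ) : ℂ) * (2 * b - (v + 1 : ℕ) + 1) - u * (2 * a - u + 1)) / 2) := by
    rw [← xic_add, ← xic_add]
    congr 1
    push_cast
    ring
  rw [pow_succ]
  generalize xic n (((v : ℂ) * (2 * b - v + 1) - (u + 1 : ℕ) * (2 * a - (u + 1 : ℕ) + 1)) / 2) = X at *
  generalize xic n ((((v + 1 : ℕ) : ℂ) * (2 * b - (v + 1 : ℕ) + 1) - u * (2 * a - u + 1)) / 2) = Z at *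
  field_simp
  linear_combination qfac n k * (-1) ^ v * e1

theorem qbin_int_zero {n : ℕ} (k u z : ℕ) (h : ¬ (z ≤ u ∧ u ≤ z + k)) :
    qbin n (k : ℂ) ((u : ℂ) - z) = 0 := by
  by_cases h1 : z ≤ u
  · apply qbin_none
    intro i _ hi
    have : (k : ℂ) + z = i + u := by linear_combination hi
    have : k + z = i + u := by exact_mod_cast this
    omega
  · obtain ⟨r, rfl⟩ := Nat.exists_eq_add_of_le (show u + 1 ≤ z by omega)
    by_cases h2 : k + 1 + r < n
    · rw [qbin_eq _ _ (k + 1 + r) h2 (by push_cast; ring), fall_nat_zero _ _ _ (by omega), zero_div]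
    · apply qbin_none
      intro i hi hi'
      have : (k : ℂ) + 1 + r = i := by rw [← hi']; push_cast; ring
      have : k + 1 + r = i := by exact_mod_cast this
      omega

/-- The scalar normalisation of `Y`. -/
def Cst (n : ℕ) (c : ℂ) (k : ℕ) : ℂ :=
  Complex.exp (Real.pi * Complex.I * (-(k : ℂ)) / 2) * Bn n k (2 * c)

theorem CG_eq {n : ℕ} (hn : 2 ≤ n) (a b c : ℂ) (k u v t : ℕ) (hk : k < n) (hu : u < n) (hv : v < n)
    (ht : t < n) (h : u + v = t + k) (hc : a + b - c = k) :
    CG n a b c u v t = Cst n c k * ((-1) ^ t * (qfac n t / fall n (2 * c) t) * Wc n a b k u v) := by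
  unfold CG
  have hc' : c = a + b - k := by linear_combination -hc
  rw [qbin_eq (2 * c) (2 * c - t) t ht (by ring),
    qbin_eq (2 * c) (a + b + c - ((n : ℂ) - 1)) (n - 1 - k) (by omega) (by
      rw [Nat.cast_sub (by omega), Nat.cast_sub (by omega)]; push_cast; rw [hc']; ring)]
  have e0 : c - a - b = -(k : ℂ) := by linear_combination -hc
  have e1 : (-1 : ℂ) ^ ((v : ℤ) - (t : ℤ)) = (-1) ^ v * (-1) ^ t := by
    rw [zpow_sub₀ (by norm_num), zpow_natCast, zpow_natCast, div_eq_mul_inv]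
    congr 1
    rw [← inv_pow]; norm_num
  rw [e0, e1, inv_div, hc]
  have hsum : (-1) ^ v * xic n (((v : ℂ) * (2 * b - (v : ℂ) + 1) - (u : ℂ) * (2 * a - (u : ℂ) + 1)) / 2)
     * ∑ z ∈ Finset.range (t + 1),
    (-1 : ℂ) ^ z * xic n ((2 * (z : ℂ) - (t : ℂ)) * (2 * c - (t : ℂ) + 1) / 2) *
    qbin n (k : ℂ) ((u : ℂ) - (z : ℂ)) *
    qbin n (2 * a - (u : ℂ) + (z : ℂ)) (2 * a - (u : ℂ)) *
    qbin n (2 * b - (v : ℂ) + ((t : ℂ) - (z : ℂ))) (2 * b - (v : ℂ)) = Wc n a b k u v := by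
    unfold Wc
    rw [← Finset.sum_filter, Finset.mul_sum]
    rw [← Finset.sum_filter_of_ne (p := fun z => z ≤ u ∧ u ≤ z + k)]
    · apply Finset.sum_nbij' (fun z => u - z) (fun x => u - x)
      · intro z hz
        simp only [Finset.mem_filter, Finset.mem_range] at hz ⊢
        omega
      · intro z hz
        simp only [Finset.mem_filter, Finset.mem_range] at hz ⊢
        omega
      · intro z hz
        simp only [Finset.mem_filter, Finset.mem_range] at hz ⊢
        omega
      · intro z hz
        simp only [Finset.mem_filter, Finset.mem_range] at hz ⊢
        omega
      · intro z hz
        simp only [Finset.mem_filter, Finset.mem_range] at hz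
        obtain ⟨x, rfl⟩ := Nat.exists_eq_add_of_le hz.2.1
        obtain ⟨m, rfl⟩ := Nat.exists_eq_add_of_le (show z ≤ t by omega)
        obtain ⟨y, rfl⟩ := Nat.exists_eq_add_of_le (show x ≤ k by omega)
        obtain rfl : v = y + m := by omega
        rw [show z + x - z = x by omega, show x + y - x = y by omega, show z + x - x = z by omega,
          show y + m - y = m by omega]
        rw [show ((z + x : ℕ) : ℂ) - z = (x : ℂ) by push_cast; ring, qbin_nat hn x y (by omega),
          qbin_eq (2 * a - ((z + x : ℕ) : ℂ) + z) _ z (by omega) (by ring),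
          qbin_eq (2 * b - ((y + m : ℕ) : ℂ) + _) _ m (by omega) (by push_cast; ring)]
        unfold Tm
        rw [show 2 * a - ((z + x : ℕ) : ℂ) + z = 2 * a - x by push_cast; ring,
          show 2 * b - ((y + m : ℕ) : ℂ) + (((z + m : ℕ) : ℂ) - z) = 2 * b - y by push_cast; ring]
        rw [xic_add]
        have e3 : (2 * (z : ℂ) - ((z + m : ℕ) : ℂ)) * (2 * c - ((z + m : ℕ) : ℂ) + 1) / 2 =
          ((z : ℂ) - m) * (2 * (a + b - x - y) - z - m + 1) / 2 := by
          rw [hc']; push_cast; ring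
        have e4 : (((y + m : ℕ) : ℂ) * (2 * b - ((y + m : ℕ) : ℂ) + 1) - ((z + x : ℕ) : ℂ) * (2 * a - ((z + x : ℕ) : ℂ) + 1)) / 2
          = (((y : ℂ) + m) * (2 * b - (y + m) + 1) - ((x : ℂ) + z) * (2 * a - (x + z) + 1)) / 2 := by
          push_cast; ring
        rw [e3, e4]
        ring
    · intro z hz hne
      by_contra hcon
      apply hne
      rw [qbin_int_zero k u z hcon]
      ring
  rw [← hsum]
  unfold Cst Bn
  ring

theorem Yinc_eq {n : ℕ} (hn : 2 ≤ n) (a b c : ℂ) (k : ℕ) (hk : k < n) (hc : a + b - c = k)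
    (u v t : Fin n) :
    Yinc n a b c (u, v) t = if (u : ℕ) + v = t + k then Cst n c k *
      ((-1) ^ (t : ℕ) * (qfac n t / fall n (2 * c) t) * Wc n a b k u v) else 0 := by
  unfold Yinc
  simp only [Matrix.of_apply]
  have hiff : (((u : ℕ) : ℂ) + ((v : ℕ) : ℂ) - ((t : ℕ) : ℂ) = a + b - c) ↔ (u : ℕ) + v = t + k := by
    rw [hc, sub_eq_iff_eq_add]
    constructor
    · intro h
      have : (u : ℕ) + v = k + t := by exact_mod_cast h
      omega
    · intro h
      have : (u : ℕ) + v = k + t := by omega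
      exact_mod_cast this
  by_cases h : (u : ℕ) + v = t + k
  · rw [if_pos (hiff.2 h), if_pos h, CG_eq hn a b c k u v t hk u.2 v.2 t.2 h hc]
  · rw [if_neg (fun h' => h (hiff.1 h')), if_neg h]

theorem Y_K {n : ℕ} (hn : 2 ≤ n) (a b c : ℂ) (k : ℕ) (hk : k < n) (hc : a + b - c = k) :
    Yinc n a b c * Km n c = (Km n a ⊗ₖ Km n b) * Yinc n a b c := by
  ext ⟨u, v⟩ t
  simp only [Km, Matrix.diagonal_kronecker_diagonal, Matrix.mul_diagonal, Matrix.diagonal_mul]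
  rw [Yinc_eq hn a b c k hk hc]
  split_ifs with h
  · rw [← xic_add, show a - (u : ℕ) + (b - (v : ℕ)) = c - (t : ℕ) by
      have : ((u : ℕ) : ℂ) + (v : ℕ) = (t : ℕ) + k := by exact_mod_cast h
      linear_combination hc - this]
    ring
  · simp

theorem Y_Ki {n : ℕ} (hn : 2 ≤ n) (a b c : ℂ) (k : ℕ) (hk : k < n) (hc : a + b - c = k) :
    Yinc n a b c * Ki n c = (Ki n a ⊗ₖ Ki n b) * Yinc n a b c := by
  ext ⟨u, v⟩ t
  simp only [Ki, Matrix.diagonal_kronecker_diagonal, Matrix.mul_diagonal, Matrix.diagonal_mul]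
  rw [Yinc_eq hn a b c k hk hc]
  split_ifs with h
  · rw [← xic_add, show -(a - (u : ℕ)) + -(b - (v : ℕ)) = -(c - (t : ℕ)) by
      have : ((u : ℕ) : ℂ) + (v : ℕ) = (t : ℕ) + k := by exact_mod_cast h
      linear_combination this - hc]
    ring
  · simp

theorem DF_mul {n : ℕ} {ι : Type*} (a b : ℂ) (M : Matrix (Fin n × Fin n) ι ℂ) (u v : Fin n)
    (q : ι) : (DF n a b * M) (u, v) q =
      (if 0 < (u : ℕ) then xic n (b - v) * qn n (2 * a - u + 1) *
        M (⟨(u : ℕ) - 1, by have := u.2; omega⟩, v) q else 0) +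
      (if 0 < (v : ℕ) then xic n (-(a - u)) * qn n (2 * b - v + 1) *
        M (u, ⟨(v : ℕ) - 1, by have := v.2; omega⟩) q else 0) := by
  unfold DF
  rw [Matrix.add_mul, Matrix.add_apply]
  congr 1
  · have := Fm_mul a (Matrix.of fun i q => M (i, v) q) u q
    simp only [Matrix.mul_apply, Matrix.of_apply] at this
    simp only [Matrix.mul_apply, Fintype.sum_prod_type, Matrix.kroneckerMap_apply, Km,
      Matrix.diagonal_apply, mul_ite, ite_mul, mul_zero, zero_mul, Finset.sum_ite_eq,
      Finset.mem_univ, if_true]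
    rw [show ∀ x y : ℂ, (if 0 < (u : ℕ) then x * y * M (⟨(u : ℕ) - 1, by have := u.2; omega⟩, v) q else 0)
      = x * (if 0 < (u : ℕ) then y * M (⟨(u : ℕ) - 1, by have := u.2; omega⟩, v) q else 0) by
      intro x y; split_ifs <;> ring, ← this, Finset.mul_sum]
    apply Finset.sum_congr rfl
    intro i _
    ring
  · have := Fm_mul b (Matrix.of fun i q => M (u, i) q) v q
    simp only [Matrix.mul_apply, Matrix.of_apply] at this
    simp only [Matrix.mul_apply, Fintype.sum_prod_type, Matrix.kroneckerMap_apply, Ki,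
      Matrix.diagonal_apply]
    rw [Finset.sum_eq_single u (by
      intro i _ hi
      apply Finset.sum_eq_zero
      intro j _
      rw [if_neg (Ne.symm hi)]; ring) (by simp)]
    rw [show ∀ x y : ℂ, (if 0 < (v : ℕ) then x * y * M (u, ⟨(v : ℕ) - 1, by have := v.2; omega⟩) q else 0)
      = x * (if 0 < (v : ℕ) then y * M (u, ⟨(v : ℕ) - 1, by have := v.2; omega⟩) q else 0) by
      intro x y; split_ifs <;> ring, ← this, Finset.mul_sum]
    apply Finset.sum_congr rfl
    intro i _
    rw [if_pos rfl]
    ring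

theorem DE_mul {n : ℕ} {ι : Type*} (a b : ℂ) (M : Matrix (Fin n × Fin n) ι ℂ) (u v : Fin n)
    (q : ι) : (DE n a b * M) (u, v) q =
      (if h : (u : ℕ) + 1 < n then qn n ((u : ℕ) + 1) * xic n (b - v) *
        M (⟨(u : ℕ) + 1, h⟩, v) q else 0) +
      (if h : (v : ℕ) + 1 < n then xic n (-(a - u)) * qn n ((v : ℕ) + 1) *
        M (u, ⟨(v : ℕ) + 1, h⟩) q else 0) := by
  unfold DE
  rw [Matrix.add_mul, Matrix.add_apply]
  congr 1
  · have := Em_mul (Matrix.of fun i q => M (i, v) q) u q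
    simp only [Matrix.mul_apply, Matrix.of_apply] at this
    simp only [Matrix.mul_apply, Fintype.sum_prod_type, Matrix.kroneckerMap_apply, Km,
      Matrix.diagonal_apply, mul_ite, ite_mul, mul_zero, zero_mul, Finset.sum_ite_eq,
      Finset.mem_univ, if_true]
    rw [show ∀ x y : ℂ, (if h : (u : ℕ) + 1 < n then y * x * M (⟨(u : ℕ) + 1, h⟩, v) q else 0)
      = x * (if h : (u : ℕ) + 1 < n then y * M (⟨(u : ℕ) + 1, h⟩, v) q else 0) by
      intro x y; split_ifs <;> ring, ← this, Finset.mul_sum]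
    apply Finset.sum_congr rfl
    intro i _
    ring
  · have := Em_mul (Matrix.of fun i q => M (u, i) q) v q
    simp only [Matrix.mul_apply, Matrix.of_apply] at this
    simp only [Matrix.mul_apply, Fintype.sum_prod_type, Matrix.kroneckerMap_apply, Ki,
      Matrix.diagonal_apply]
    rw [Finset.sum_eq_single u (by
      intro i _ hi
      apply Finset.sum_eq_zero
      intro j _
      rw [if_neg (Ne.symm hi)]; ring) (by simp)]
    rw [show ∀ x y : ℂ, (if h : (v : ℕ) + 1 < n then x * y * M (u, ⟨(v : ℕ) + 1, h⟩) q else 0)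
      = x * (if h : (v : ℕ) + 1 < n then y * M (u, ⟨(v : ℕ) + 1, h⟩) q else 0) by
      intro x y; split_ifs <;> ring, ← this, Finset.mul_sum]
    apply Finset.sum_congr rfl
    intro i _
    rw [if_pos rfl]
    ring

theorem Y_F {n : ℕ} (hn : 2 ≤ n) (a b c : ℂ) (k : ℕ) (hk : k < n) (hc : a + b - c = k)
    (h2c : NotInt (2 * c)) :
    Yinc n a b c * Fm n c = DF n a b * Yinc n a b c := by
  ext ⟨u, v⟩ t
  rw [mul_Fm, DF_mul]
  simp only [Yinc_eq hn a b c k hk hc]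
  by_cases h : (u : ℕ) + v = t + 1 + k
  · have hr := Wc_rec hn a b k u v u.2 v.2
    have ht : ((u : ℕ) : ℂ) + (v : ℕ) - k = (t : ℕ) + 1 := by
      have : ((u : ℕ) : ℂ) + (v : ℕ) = (t : ℕ) + 1 + k := by exact_mod_cast h
      rw [this]; ring
    rw [ht] at hr
    have f1 : (if 0 < (u : ℕ) then xic n (b - v) * qn n (2 * a - u + 1) *
        (if (u : ℕ) - 1 + v = t + k then Cst n c k *
      ((-1) ^ (t : ℕ) * (qfac n t / fall n (2 * c) t) * Wc n a b k ((u : ℕ) - 1) v) else 0) else 0)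
      = Cst n c k * ((-1) ^ (t : ℕ) * (qfac n t / fall n (2 * c) t)) *
       (if 0 < (u : ℕ) then xic n (b - v) * qn n (2 * a - u + 1) * Wc n a b k ((u : ℕ) - 1) v else 0) := by
      by_cases hu : 0 < (u : ℕ)
      · rw [if_pos hu, if_pos hu, if_pos (by omega)]; ring
      · rw [if_neg hu, if_neg hu, mul_zero]
    have f2 : (if 0 < (v : ℕ) then xic n (-(a - u)) * qn n (2 * b - v + 1) *
        (if (u : ℕ) + ((v : ℕ) - 1) = t + k then Cst n c k *
      ((-1) ^ (t : ℕ) * (qfac n t / fall n (2 * c) t) * Wc n a b k u ((v : ℕ) - 1)) else 0) else 0)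
      = Cst n c k * ((-1) ^ (t : ℕ) * (qfac n t / fall n (2 * c) t)) *
       (if 0 < (v : ℕ) then xic n (-(a - u)) * qn n (2 * b - v + 1) * Wc n a b k u ((v : ℕ) - 1) else 0) := by
      by_cases hu : 0 < (v : ℕ)
      · rw [if_pos hu, if_pos hu, if_pos (by omega)]; ring
      · rw [if_neg hu, if_neg hu, mul_zero]
    rw [f1, f2]
    have f3 : (if h : (t : ℕ) + 1 < n then (if (u : ℕ) + v = t + 1 + k then Cst n c k *
      ((-1) ^ ((t : ℕ) + 1) * (qfac n (t + 1) / fall n (2 * c) (t + 1)) * Wc n a b k u v) else 0) *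
        qn n (2 * c - t) else 0) = - (Cst n c k * ((-1) ^ (t : ℕ) * (qfac n t / fall n (2 * c) t)) *
         (qn n ((t : ℕ) + 1) * Wc n a b k u v)) := by
      split_ifs with h1
      · rw [qfac_succ, fall_succ]
        have g1 := fall_ne hn h2c t
        have g2 := NotInt.qn_ne hn (h2c.shift (-(t : ℕ)) (y := 2 * c - (t : ℕ)) (by push_cast; ring))
        field_simp
        ring
      · have : (t : ℕ) + 1 = n := by have := t.2; omega
        have h2 : ((t : ℕ) : ℂ) + 1 = n := by exact_mod_cast this
        rw [h2, qn_n n hn]; ring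
    rw [f3]
    linear_combination -(Cst n c k * ((-1) ^ (t : ℕ) * (qfac n t / fall n (2 * c) t))) * hr
  · rw [if_neg h]
    have f1 : (if 0 < (u : ℕ) then xic n (b - v) * qn n (2 * a - u + 1) *
        (if (u : ℕ) - 1 + v = t + k then Cst n c k *
      ((-1) ^ (t : ℕ) * (qfac n t / fall n (2 * c) t) * Wc n a b k ((u : ℕ) - 1) v) else 0) else 0) = 0 := by
      by_cases hu : 0 < (u : ℕ)
      · rw [if_pos hu, if_neg (by omega)]; ring
      · rw [if_neg hu]
    have f2 : (if 0 < (v : ℕ) then xic n (-(a - u)) * qn n (2 * b - v + 1) *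
        (if (u : ℕ) + ((v : ℕ) - 1) = t + k then Cst n c k *
      ((-1) ^ (t : ℕ) * (qfac n t / fall n (2 * c) t) * Wc n a b k u ((v : ℕ) - 1)) else 0) else 0) = 0 := by
      by_cases hu : 0 < (v : ℕ)
      · rw [if_pos hu, if_neg (by omega)]; ring
      · rw [if_neg hu]
    rw [f1, f2]
    simp

theorem DE_Y_zero {n : ℕ} (hn : 2 ≤ n) (a b c : ℂ) (k : ℕ) (hk : k < n) (hc : a + b - c = k)
    (p : Fin n × Fin n) : (DE n a b * Yinc n a b c) p ⟨0, by omega⟩ = 0 := by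
  obtain ⟨u, v⟩ := p
  rw [DE_mul]
  simp only [Yinc_eq hn a b c k hk hc]
  by_cases h : (u : ℕ) + v + 1 = k
  · have hr := Wc_zero_rec hn a b k u v h hk
    rw [dif_pos (by omega), dif_pos (by omega), if_pos (by omega), if_pos (by omega)]
    linear_combination (Cst n c k * ((-1) ^ 0 * (qfac n 0 / fall n (2 * c) 0))) * hr
  · rw [if_neg (by omega), if_neg (by omega)]
    simp

theorem Y_E {n : ℕ} (hn : 2 ≤ n) (a b c : ℂ) (k : ℕ) (hk : k < n) (hc : a + b - c = k)
    (h2c : NotInt (2 * c)) :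
    Yinc n a b c * Em n = DE n a b * Yinc n a b c := by
  have hF := Y_F hn a b c k hk hc h2c
  have hK := Y_K hn a b c k hk hc
  have hKi := Y_Ki hn a b c k hk hc
  have hD := DE_DF hn a b
  have hC := Em_Fm hn c
  set Y := Yinc n a b c with hY
  have key : DE n a b * Y - Y * Em n = 0 := by
    apply col_zero hn c h2c _ (DF n a b)
    · have h1 : DF n a b * DE n a b = DE n a b * DF n a b - qn n 1 • ((Km n a ⊗ₖ Km n b) * (Km n a ⊗ₖ Km n b)
        - (Ki n a ⊗ₖ Ki n b) * (Ki n a ⊗ₖ Ki n b)) := by rw [← hD]; abel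
      have h2 : Em n * Fm n c = Fm n c * Em n + qn n 1 • (Km n c * Km n c - Ki n c * Ki n c) := by
        rw [← hC]; abel
      have h3 : (Km n a ⊗ₖ Km n b) * (Km n a ⊗ₖ Km n b) * Y = Y * (Km n c * Km n c) := by
        rw [Matrix.mul_assoc, ← hK, ← Matrix.mul_assoc, ← hK, Matrix.mul_assoc]
      have h4 : (Ki n a ⊗ₖ Ki n b) * (Ki n a ⊗ₖ Ki n b) * Y = Y * (Ki n c * Ki n c) := by
        rw [Matrix.mul_assoc, ← hKi, ← Matrix.mul_assoc, ← hKi, Matrix.mul_assoc]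
      rw [Matrix.sub_mul, Matrix.mul_sub, ← Matrix.mul_assoc (DF n a b) (DE n a b), h1,
        Matrix.sub_mul, Matrix.smul_mul, Matrix.sub_mul, h3, h4, Matrix.mul_assoc Y, h2,
        Matrix.mul_assoc (DE n a b), hF, ← Matrix.mul_assoc (DF n a b) Y, ← hF,
        Matrix.mul_assoc (DE n a b) (DF n a b), ← hF, Matrix.mul_add, Matrix.mul_smul, Matrix.mul_sub,
        Matrix.mul_assoc Y]
      abel
    · intro p
      rw [Matrix.sub_apply, hY, DE_Y_zero hn a b c k hk hc p, mul_Em]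
      simp
  exact (sub_eq_zero.1 key).symm

/-! ### Triple tensor products -/

/-- Iterated coproduct of `F`. -/
def D3F (n : ℕ) (a b d : ℂ) : Matrix (Fin n × Fin n × Fin n) (Fin n × Fin n × Fin n) ℂ :=
  Fm n a ⊗ₖ (Km n b ⊗ₖ Km n d) + Ki n a ⊗ₖ (Fm n b ⊗ₖ Km n d) + Ki n a ⊗ₖ (Ki n b ⊗ₖ Fm n d)

/-- Iterated coproduct of `E`. -/
def D3E (n : ℕ) (a b d : ℂ) : Matrix (Fin n × Fin n × Fin n) (Fin n × Fin n × Fin n) ℂ :=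
  Em n ⊗ₖ (Km n b ⊗ₖ Km n d) + Ki n a ⊗ₖ (Em n ⊗ₖ Km n d) + Ki n a ⊗ₖ (Ki n b ⊗ₖ Em n)

/-- `A ⊗ Z` reassociated. -/
def tl (n : ℕ) (A : Matrix (Fin n × Fin n) (Fin n) ℂ) (Z : Matrix (Fin n) (Fin n) ℂ) :
    Matrix (Fin n × Fin n × Fin n) (Fin n × Fin n) ℂ :=
  (A ⊗ₖ Z).submatrix (Equiv.prodAssoc (Fin n) (Fin n) (Fin n)).symm (Equiv.refl _)

theorem tensL_eq (n : ℕ) (A : Matrix (Fin n × Fin n) (Fin n) ℂ) : tensL n A = tl n A 1 := by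
  ext p q
  simp [tensL, tl, Matrix.one_apply]

theorem tensR_eq (n : ℕ) (A : Matrix (Fin n × Fin n) (Fin n) ℂ) :
    tensR n A = (1 : Matrix (Fin n) (Fin n) ℂ) ⊗ₖ A := by
  ext p q
  simp [tensR, Matrix.one_apply]

theorem tl_mul_right {n : ℕ} (A : Matrix (Fin n × Fin n) (Fin n) ℂ)
    (X Z : Matrix (Fin n) (Fin n) ℂ) : tl n A 1 * (X ⊗ₖ Z) = tl n (A * X) Z := by
  have : (A * X) ⊗ₖ Z = (A ⊗ₖ (1 : Matrix (Fin n) (Fin n) ℂ)) * (X ⊗ₖ Z) := by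
    rw [← Matrix.mul_kronecker_mul, Matrix.one_mul]
  unfold tl
  rw [this]
  ext p q
  simp [Matrix.mul_apply, Matrix.submatrix_apply]

theorem tl_mul_left {n : ℕ} (A : Matrix (Fin n × Fin n) (Fin n) ℂ)
    (P Q Z : Matrix (Fin n) (Fin n) ℂ) :
    (P ⊗ₖ (Q ⊗ₖ Z)) * tl n A 1 = tl n ((P ⊗ₖ Q) * A) Z := by
  have h1 : ((P ⊗ₖ Q) * A) ⊗ₖ Z = ((P ⊗ₖ Q) ⊗ₖ Z) * (A ⊗ₖ (1 : Matrix (Fin n) (Fin n) ℂ)) := by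
    rw [← Matrix.mul_kronecker_mul, Matrix.mul_one]
  have h2 : P ⊗ₖ (Q ⊗ₖ Z) = ((P ⊗ₖ Q) ⊗ₖ Z).submatrix (Equiv.prodAssoc (Fin n) (Fin n) (Fin n)).symm
      (Equiv.prodAssoc (Fin n) (Fin n) (Fin n)).symm := by
    ext p q
    simp [mul_assoc]
  unfold tl
  rw [h1, h2, Matrix.submatrix_mul_equiv]

theorem tl_add {n : ℕ} (A B : Matrix (Fin n × Fin n) (Fin n) ℂ) (Z : Matrix (Fin n) (Fin n) ℂ) :
    tl n (A + B) Z = tl n A Z + tl n B Z := by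
  ext p q
  simp [tl, add_mul]

theorem tensL_F {n : ℕ} (hn : 2 ≤ n) (a b e d : ℂ) (k : ℕ) (hk : k < n) (he : a + b - e = k)
    (h2e : NotInt (2 * e)) :
    tensL n (Yinc n a b e) * DF n e d = D3F n a b d * tensL n (Yinc n a b e) := by
  rw [tensL_eq, DF, D3F, Matrix.mul_add, tl_mul_right, tl_mul_right, Matrix.add_mul, Matrix.add_mul,
    tl_mul_left, tl_mul_left, tl_mul_left, Y_F hn a b e k hk he h2e, Y_Ki hn a b e k hk he, DF,
    Matrix.add_mul, tl_add]

theorem tensL_E {n : ℕ} (hn : 2 ≤ n) (a b e d : ℂ) (k : ℕ) (hk : k < n) (he : a + b - e = k)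
    (h2e : NotInt (2 * e)) :
    tensL n (Yinc n a b e) * DE n e d = D3E n a b d * tensL n (Yinc n a b e) := by
  rw [tensL_eq, DE, D3E, Matrix.mul_add, tl_mul_right, tl_mul_right, Matrix.add_mul, Matrix.add_mul,
    tl_mul_left, tl_mul_left, tl_mul_left, Y_E hn a b e k hk he h2e, Y_Ki hn a b e k hk he, DE,
    Matrix.add_mul, tl_add]

theorem tensR_F {n : ℕ} (hn : 2 ≤ n) (a b d f : ℂ) (k : ℕ) (hk : k < n) (hf : b + d - f = k)
    (h2f : NotInt (2 * f)) :
    tensR n (Yinc n b d f) * DF n a f = D3F n a b d * tensR n (Yinc n b d f) := by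
  rw [tensR_eq, DF, D3F, Matrix.mul_add, Matrix.add_mul, Matrix.add_mul]
  simp only [← Matrix.mul_kronecker_mul, Matrix.one_mul, Matrix.mul_one]
  rw [Y_F hn b d f k hk hf h2f, Y_K hn b d f k hk hf, DF, Matrix.add_mul, Matrix.kronecker_add,
    add_assoc]

theorem tensR_E {n : ℕ} (hn : 2 ≤ n) (a b d f : ℂ) (k : ℕ) (hk : k < n) (hf : b + d - f = k)
    (h2f : NotInt (2 * f)) :
    tensR n (Yinc n b d f) * DE n a f = D3E n a b d * tensR n (Yinc n b d f) := by
  rw [tensR_eq, DE, D3E, Matrix.mul_add, Matrix.add_mul, Matrix.add_mul]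
  simp only [← Matrix.mul_kronecker_mul, Matrix.one_mul, Matrix.mul_one]
  rw [Y_E hn b d f k hk hf h2f, Y_K hn b d f k hk hf, DE, Matrix.add_mul, Matrix.kronecker_add,
    add_assoc]

theorem D3E_apply {n : ℕ} (a b d : ℂ) (u v w : Fin n) (q : Fin n × Fin n × Fin n) :
    D3E n a b d (u, v, w) q =
      Em n u q.1 * (if v = q.2.1 then xic n (b - v) else 0) * (if w = q.2.2 then xic n (d - w) else 0)
      + (if u = q.1 then xic n (-(a - u)) else 0) * Em n v q.2.1 *
        (if w = q.2.2 then xic n (d - w) else 0)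
      + (if u = q.1 then xic n (-(a - u)) else 0) * (if v = q.2.1 then xic n (-(b - v)) else 0) *
        Em n w q.2.2 := by
  simp [D3E, Km, Ki, Matrix.diagonal_apply, mul_assoc]

theorem D3E_unique {n : ℕ} (hn : 2 ≤ n) (a b d : ℂ) {ι : Type*}
    (M : Matrix (Fin n × Fin n × Fin n) ι ℂ) (t : ι)
    (h : ∀ p, (D3E n a b d * M) p t = 0)
    (h0 : ∀ u w : Fin n, M (u, ⟨0, by omega⟩, w) t = 0) : ∀ p, M p t = 0 := by
  have key : ∀ v : ℕ, ∀ hv : v < n, ∀ u w, M (u, ⟨v, hv⟩, w) t = 0 := by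
    intro v
    induction v with
    | zero => intro _ u w; exact h0 u w
    | succ v ih =>
      intro hv u w
      have h1 := h (u, ⟨v, by omega⟩, w)
      rw [Matrix.mul_apply] at h1
      rw [Finset.sum_eq_single (u, ⟨v + 1, hv⟩, w)] at h1
      · rw [D3E_apply] at h1
        have e1 : (⟨v, by omega⟩ : Fin n) ≠ ⟨v + 1, hv⟩ := by
          intro hh; have := congrArg Fin.val hh; simp at this
        simp only [if_neg e1, mul_zero, zero_mul, zero_add, add_zero, if_true] at h1
        rcases mul_eq_zero.1 h1 with h2 | h2
        · exfalso
          rcases mul_eq_zero.1 h2 with h3 | h3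
          · rcases mul_eq_zero.1 h3 with h4 | h4
            · exact xic_ne _ _ h4
            · simp only [Em, Matrix.of_apply, if_true] at h4
              exact qn_nat_ne hn (by omega) hv h4
          · exact xic_ne _ _ h3
        · exact h2
      · rintro ⟨u', v', w'⟩ _ hne
        by_cases hv' : v' = ⟨v, by omega⟩
        · subst hv'
          rw [ih, mul_zero]
        · rw [D3E_apply]
          simp only [if_neg (Ne.symm hv'), mul_zero, zero_mul, zero_add, add_zero]
          by_cases hu : u = u'
          · by_cases hw : w = w'
            · subst hu; subst hw
              have : ¬ ((v' : ℕ) = v + 1) := by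
                intro hh
                apply hne
                have : v' = ⟨v + 1, hv⟩ := Fin.ext hh
                rw [this]
              simp [Em, this]
            · simp [hw]
          · simp [hu]
      · simp
  rintro ⟨u, v, w⟩
  exact key v v.2 u w

/-- Two families of intertwiners agree if their `v = 0` slices of column `0` agree. -/
theorem reduce {n : ℕ} (hn : 2 ≤ n) (a b d c : ℂ) (h2c : NotInt (2 * c))
    (M : Matrix (Fin n × Fin n × Fin n) (Fin n) ℂ)
    (hF : M * Fm n c = D3F n a b d * M) (hE : M * Em n = D3E n a b d * M)
    (h0 : ∀ u w : Fin n, M (u, ⟨0, by omega⟩, w) ⟨0, by omega⟩ = 0) : M = 0 := by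
  apply col_zero hn c h2c M _ hF
  apply D3E_unique hn a b d M _ _ h0
  intro p
  rw [← hE, mul_Em]
  simp

/-! ### The slice `v = 0`, `t = 0` -/

theorem Wc_left {n : ℕ} (hn : 2 ≤ n) (a b : ℂ) (k u : ℕ) (hk : k < n) :
    Wc n a b k u 0 = if k ≤ u then (-1) ^ (u - k) *
      xic n (-((u : ℂ) * (2 * a - u + 1)) / 2
        + ((u : ℂ) - k) * (2 * (a + b - k) - (u - k) + 1) / 2) *
      (fall n (2 * a - k) (u - k) / qfac n (u - k)) else 0 := by
  unfold Wc
  rw [Finset.sum_eq_single k]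
  · have := qfac_ne hn hk
    by_cases h : k ≤ u
    · rw [if_pos (by omega), if_pos h]
      obtain ⟨s, rfl⟩ := Nat.exists_eq_add_of_le h
      rw [Nat.add_sub_cancel_left, Nat.sub_self, Tm]
      simp only [qfac_zero, fall_zero, Nat.sub_self]
      push_cast
      rw [show (((0 : ℂ) + 0) * (2 * b - (0 + 0) + 1) - ((k : ℂ) + s) * (2 * a - (k + s) + 1)) / 2
          + ((s : ℂ) - 0) * (2 * (a + b - k - 0) - s - 0 + 1) / 2
        = -(((k : ℂ) + s) * (2 * a - (k + s) + 1)) / 2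
        + ((k : ℂ) + s - k) * (2 * (a + b - k) - (k + s - k) + 1) / 2 by ring]
      field_simp
    · rw [if_neg (by omega), if_neg h]
  · intro x hx hxu
    have : x < k + 1 := by simpa using hx
    rw [if_neg (by omega)]
  · intro hx
    exfalso
    apply hx
    simp

theorem Wc_right {n : ℕ} (hn : 2 ≤ n) (a b : ℂ) (k v : ℕ) (hk : k < n) :
    Wc n a b k 0 v = if k ≤ v then (-1) ^ v *
      xic n (((v : ℂ) * (2 * b - v + 1)) / 2
        - ((v : ℂ) - k) * (2 * (a + b - k) - (v - k) + 1) / 2) *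
      (fall n (2 * b - k) (v - k) / qfac n (v - k)) else 0 := by
  unfold Wc
  rw [Finset.sum_eq_single 0]
  · have := qfac_ne hn hk
    by_cases h : k ≤ v
    · rw [if_pos (by omega), if_pos h]
      obtain ⟨s, rfl⟩ := Nat.exists_eq_add_of_le h
      rw [Nat.sub_zero, Nat.add_sub_cancel_left, Nat.sub_self, Tm]
      simp only [qfac_zero, fall_zero]
      push_cast
      rw [show (((k : ℂ) + s) * (2 * b - (k + s) + 1) - ((0 : ℂ) + 0) * (2 * a - (0 + 0) + 1)) / 2
          + ((0 : ℂ) - s) * (2 * (a + b - 0 - k) - 0 - s + 1) / 2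
        = (((k : ℂ) + s) * (2 * b - (k + s) + 1)) / 2
        - ((k : ℂ) + s - k) * (2 * (a + b - k) - (k + s - k) + 1) / 2 by ring]
      field_simp
    · rw [if_neg (by omega), if_neg h]
  · intro x hx hxu
    rw [if_neg (by omega)]
  · intro hx
    exfalso
    apply hx
    simp

/-- Common phase. -/
def PH (n K : ℕ) (a d : ℂ) (u w : ℕ) : ℂ :=
  Complex.exp (Real.pi * Complex.I * (-(K : ℂ)) / 2) * ((-1) ^ w *
    xic n (((w : ℂ) * (2 * d - w + 1) - u * (2 * a - u + 1)) / 2))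

theorem exp_split (k1 k2 : ℕ) : Complex.exp (Real.pi * Complex.I * (-((k1 + k2 : ℕ) : ℂ)) / 2)
    = Complex.exp (Real.pi * Complex.I * (-(k1 : ℂ)) / 2) *
      Complex.exp (Real.pi * Complex.I * (-(k2 : ℂ)) / 2) := by
  rw [← Complex.exp_add]
  congr 1
  push_cast
  ring

theorem lhs_entry {n : ℕ} (hn : 2 ≤ n) (a b c d e : ℂ) (k1 k2 : ℕ) (h1 : k1 < n) (h2 : k2 < n)
    (he : a + b - e = k1) (hc : e + d - c = k2) (u w : Fin n) :
    (tensL n (Yinc n a b e) * Yinc n e d c) (u, ⟨0, by omega⟩, w) ⟨0, by omega⟩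
      = if (u : ℕ) + w = k1 + k2 ∧ (w : ℕ) ≤ k2 then PH n (k1 + k2) a d u w *
          (Bn n k1 (2 * e) * Bn n k2 (2 * c) *
          (1 / fall n (2 * e) (k2 - w) * fall n (2 * a - k1) (k2 - w) *
            (qfac n k2 / (qfac n (k2 - w) * qfac n w)))) else 0 := by
  rw [Matrix.mul_apply, Fintype.sum_prod_type]
  have e1 : ∀ r : Fin n, (∑ s : Fin n, tensL n (Yinc n a b e) (u, ⟨0, by omega⟩, w) (r, s) *
      Yinc n e d c (r, s) ⟨0, by omega⟩) = Yinc n a b e (u, ⟨0, by omega⟩) r *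
        Yinc n e d c (r, w) ⟨0, by omega⟩ := by
    intro r
    rw [Finset.sum_eq_single w]
    · simp [tensL]
    · intro s _ hs
      simp [tensL, Ne.symm hs]
    · simp
  rw [Finset.sum_congr rfl (fun r _ => e1 r)]
  simp only [Yinc_eq hn a b e k1 h1 he, Yinc_eq hn e d c k2 h2 hc]
  by_cases h : (u : ℕ) + w = k1 + k2 ∧ (w : ℕ) ≤ k2
  · rw [if_pos h]
    obtain ⟨p, hp⟩ := Nat.exists_eq_add_of_le h.2
    have hpn : p < n := by omega
    rw [Finset.sum_eq_single (⟨p, hpn⟩ : Fin n)]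
    · rw [if_pos (by simp only; omega), if_pos (by simp only; omega)]
      simp only
      rw [Wc_left hn a b k1 u h1, Wc_zero n e d k2 p w (by omega), if_pos (by omega)]
      rw [show (u : ℕ) - k1 = p by omega, show k2 - (w : ℕ) = p by omega]
      have hu : ((u : ℕ) : ℂ) = k1 + p := by
        have : (u : ℕ) = k1 + p := by omega
        exact_mod_cast this
      have hph : xic n (((w : ℕ) * (2 * d - (w : ℕ) + 1) - (u : ℕ) * (2 * a - (u : ℕ) + 1)) / 2)
        = xic n (-(((u : ℕ) : ℂ) * (2 * a - (u : ℕ) + 1)) / 2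
        + (((u : ℕ) : ℂ) - k1) * (2 * (a + b - k1) - ((u : ℕ) - k1) + 1) / 2) *
          xic n ((((w : ℕ) : ℂ) * (2 * d - (w : ℕ) + 1) - p * (2 * e - p + 1)) / 2) := by
        rw [← xic_add]
        congr 1
        rw [hu]
        linear_combination (-(p : ℂ)) * he
      unfold PH Cst
      rw [hph, exp_split, qfac_zero, fall_zero]
      have sg : ((-1 : ℂ) ^ p) * (-1) ^ p = 1 := by rw [← mul_pow]; simp
      have g1 := qfac_ne hn hpn
      have g2 := qfac_ne hn w.2
      have e5 : qfac n p / fall n (2 * e) p * (fall n (2 * a - k1) p / qfac n p)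
        = 1 / fall n (2 * e) p * fall n (2 * a - k1) p := by field_simp
      rw [← e5]
      generalize xic n (-(((u : ℕ) : ℂ) * (2 * a - (u : ℕ) + 1)) / 2
        + (((u : ℕ) : ℂ) - k1) * (2 * (a + b - k1) - ((u : ℕ) - k1) + 1) / 2) = X1
      generalize xic n ((((w : ℕ) : ℂ) * (2 * d - (w : ℕ) + 1) - p * (2 * e - p + 1)) / 2) = X2
      generalize qfac n p / fall n (2 * e) p = X3
      generalize (fall n (2 * a - k1) p / qfac n p) = X4
      generalize qfac n k2 / (qfac n p * qfac n w) = X5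
      generalize Complex.exp (Real.pi * Complex.I * (-(k1 : ℂ)) / 2) = X6
      generalize Complex.exp (Real.pi * Complex.I * (-(k2 : ℂ)) / 2) = X7
      simp only [pow_zero, div_one, one_mul]
      linear_combination (X1 * X2 * X3 * X4 * X5 * X6 * X7 * Bn n k1 (2 * e) * Bn n k2 (2 * c) *
        (-1) ^ (w : ℕ)) * sg
    · intro r _ hr
      have : (r : ℕ) ≠ p := fun hh => hr (Fin.ext hh)
      rw [if_neg (show ¬ ((r : ℕ) + w = 0 + k2) by omega), mul_zero]
    · simp
  · rw [if_neg h]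
    apply Finset.sum_eq_zero
    intro r _
    by_cases hr : (r : ℕ) + w = k2
    · rw [if_neg (by omega), zero_mul]
    · rw [if_neg (show ¬ ((r : ℕ) + w = 0 + k2) by omega), mul_zero]

theorem rhs_entry {n : ℕ} (hn : 2 ≤ n) (a b c d f : ℂ) (j k3 : ℕ) (h1 : j < n) (h2 : k3 < n)
    (hf : b + d - f = j) (hc : a + f - c = k3) (u w : Fin n) :
    (tensR n (Yinc n b d f) * Yinc n a f c) (u, ⟨0, by omega⟩, w) ⟨0, by omega⟩
      = if (u : ℕ) + w = j + k3 ∧ j ≤ (w : ℕ) then PH n (j + k3) a d u w *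
          (Bn n j (2 * f) * Bn n k3 (2 * c) *
          (1 / fall n (2 * f) (w - j) * fall n (2 * d - j) (w - j) *
            (qfac n k3 / (qfac n u * qfac n (w - j))))) else 0 := by
  rw [Matrix.mul_apply, Fintype.sum_prod_type]
  rw [Finset.sum_eq_single u (by
    intro r _ hr
    apply Finset.sum_eq_zero
    intro s _
    simp [tensR, Ne.symm hr]) (by simp)]
  have e1 : ∀ s : Fin n, tensR n (Yinc n b d f) (u, ⟨0, by omega⟩, w) (u, s)
     = Yinc n b d f (⟨0, by omega⟩, w) s := by
    intro s
    simp [tensR]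
  simp only [e1, Yinc_eq hn b d f j h1 hf, Yinc_eq hn a f c k3 h2 hc]
  by_cases h : (u : ℕ) + w = j + k3 ∧ j ≤ (w : ℕ)
  · rw [if_pos h]
    obtain ⟨p, hp⟩ := Nat.exists_eq_add_of_le h.2
    have hpn : p < n := by have := w.2; omega
    rw [Finset.sum_eq_single (⟨p, hpn⟩ : Fin n)]
    · rw [if_pos (by simp only; omega), if_pos (by simp only; omega)]
      simp only
      rw [Wc_right hn b d j w h1, Wc_zero n a f k3 u p (by omega), if_pos (by omega)]
      rw [show (w : ℕ) - j = p by omega]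
      have hu : ((w : ℕ) : ℂ) = j + p := by exact_mod_cast hp
      have hph : xic n (((w : ℕ) * (2 * d - (w : ℕ) + 1) - (u : ℕ) * (2 * a - (u : ℕ) + 1)) / 2)
        = xic n ((((w : ℕ) : ℂ) * (2 * d - (w : ℕ) + 1)) / 2
        - (((w : ℕ) : ℂ) - j) * (2 * (b + d - j) - ((w : ℕ) - j) + 1) / 2) *
          xic n (((p : ℂ) * (2 * f - p + 1) - (u : ℕ) * (2 * a - (u : ℕ) + 1)) / 2) := by
        rw [← xic_add]
        congr 1
        rw [hu]
        linear_combination (p : ℂ) * hf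
      unfold PH Cst
      rw [hph, exp_split, qfac_zero, fall_zero]
      have sg : ((-1 : ℂ) ^ p) * (-1) ^ p = 1 := by rw [← mul_pow]; simp
      have g1 := qfac_ne hn hpn
      have g2 := qfac_ne hn u.2
      have e5 : qfac n p / fall n (2 * f) p * (fall n (2 * d - j) p / qfac n p)
        = 1 / fall n (2 * f) p * fall n (2 * d - j) p := by field_simp
      rw [← e5]
      generalize xic n ((((w : ℕ) : ℂ) * (2 * d - (w : ℕ) + 1)) / 2
        - (((w : ℕ) : ℂ) - j) * (2 * (b + d - j) - ((w : ℕ) - j) + 1) / 2) = X1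
      generalize xic n (((p : ℂ) * (2 * f - p + 1) - (u : ℕ) * (2 * a - (u : ℕ) + 1)) / 2) = X2
      generalize qfac n p / fall n (2 * f) p = X3
      generalize (fall n (2 * d - j) p / qfac n p) = X4
      generalize qfac n k3 / (qfac n u * qfac n p) = X5
      generalize Complex.exp (Real.pi * Complex.I * (-(j : ℂ)) / 2) = X6
      generalize Complex.exp (Real.pi * Complex.I * (-(k3 : ℂ)) / 2) = X7
      simp only [pow_zero, div_one, one_mul]
      linear_combination (X1 * X2 * X3 * X4 * X5 * X6 * X7 * Bn n j (2 * f) * Bn n k3 (2 * c) *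
        (-1) ^ (w : ℕ)) * sg
    · intro r _ hr
      have : (r : ℕ) ≠ p := fun hh => hr (Fin.ext hh)
      rw [if_neg (show ¬ (0 + (w : ℕ) = r + j) by omega), zero_mul]
    · simp
  · rw [if_neg h]
    apply Finset.sum_eq_zero
    intro r _
    by_cases hr : (w : ℕ) = r + j
    · rw [if_neg (show ¬ ((u : ℕ) + r = 0 + k3) by omega), mul_zero]
    · rw [if_neg (show ¬ (0 + (w : ℕ) = r + j) by omega), zero_mul]

theorem sixj_eq {n : ℕ} (hn : 2 ≤ n) (a b c d e f : ℂ) (k1 k2 j k3 : ℕ) (h1 : k1 < n) (h2 : k2 < n)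
    (hj : j < n) (h3 : k3 < n) (he : a + b - e = k1) (hc : d + e - c = k2) (hf : b + d - f = j)
    (hK : j + k3 = k1 + k2) (h2c : NotInt (2 * c)) (h2f : NotInt (2 * f)) :
    sixj n a b e d c f = (-1) ^ k3 / Bn n 0 (2 * f) * (qfac n k2 / (qfac n j * qfac n k3)) *
      Bn n k1 (2 * e) * (qfac n k2 / fall n (2 * e) k2) * ((-1) ^ k2 *
        U1 n k1 k2 j (2 * a) (2 * b) (2 * d) * rise n (2 * c + 2) k3 /
        (rise n (2 * c + 2) k2 * qfac n k3)) := by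
  have hK' : (j : ℂ) + k3 = k1 + k2 := by exact_mod_cast hK
  have hc3 : a + f - c = k3 := by linear_combination he + hc - hf - hK'
  unfold sixj
  rw [natIdx_eq _ _ hc3, natIdx_eq _ _ hc, natIdx_eq _ _ he, natIdx_eq _ _ hf]
  rw [qbin_eq (2 * f + n) (2 * f + 1) (n - 1) (by omega) (by
    rw [Nat.cast_sub (by omega)]; push_cast; ring), fall_add_n hn,
    qbin_eq (2 * e) (a + b + e + 1 - n) (n - 1 - k1) (by omega) (by
      rw [Nat.cast_sub (by omega), Nat.cast_sub (by omega)]; push_cast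
      linear_combination -he),
    qbin_eq (2 * e) (e + c - d) k2 h2 (by linear_combination hc)]
  have r3 := rise_ne hn (h2c.shift 2 (y := 2 * c + 2) (by push_cast; ring)) k3
  have r2 := rise_ne hn (h2c.shift 2 (y := 2 * c + 2) (by push_cast; ring)) k2
  have q1 := qfac_ne hn h1
  have q2 := qfac_ne hn h2
  have q3 := qfac_ne hn h3
  have qj := qfac_ne hn hj
  have hS : (qfac n k1 * qfac n k3 * rise n (2 * c + 2) k2) * ∑ z ∈ Finset.Icc (k2 - j) (min k2 k3),
    (-1 : ℂ) ^ z * qbin n (a + f + c + 1) (2 * c + (z : ℂ) + 1) *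
    qbin n ((a + c - f) + (z : ℂ)) (a + c - f) *
    qbin n ((b + f - d) + (d + e - c) - (z : ℂ)) (b + f - d) *
    qbin n ((d + c - e) + (z : ℂ)) (d + f - b) =
      (-1) ^ k2 * U1 n k1 k2 j (2 * a) (2 * b) (2 * d) * rise n (2 * c + 2) k3 := by
    unfold U1
    rw [← Finset.sum_filter, show k1 + k2 - j = k3 by omega]
    rw [show ∀ A B C D E : ℂ, A * (B * C * D) * E = (A * B * C * E) * D by intros; ring]
    rw [Finset.mul_sum, Finset.mul_sum]
    apply Finset.sum_nbij' (fun z => k2 - z) (fun y => k2 - y)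
    · intro z hz
      simp only [Finset.mem_filter, Finset.mem_range, Finset.mem_Icc] at hz ⊢
      omega
    · intro z hz
      simp only [Finset.mem_filter, Finset.mem_range, Finset.mem_Icc] at hz ⊢
      omega
    · intro z hz
      simp only [Finset.mem_filter, Finset.mem_range, Finset.mem_Icc] at hz ⊢
      omega
    · intro z hz
      simp only [Finset.mem_filter, Finset.mem_range, Finset.mem_Icc] at hz ⊢
      omega
    · intro z hz
      simp only [Finset.mem_Icc] at hz
      obtain ⟨r, hr⟩ := Nat.exists_eq_add_of_le (show z ≤ k3 by omega)
      obtain ⟨y, hy⟩ := Nat.exists_eq_add_of_le (show z ≤ k2 by omega)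
      obtain ⟨i, hi⟩ := Nat.exists_eq_add_of_le (show y ≤ j by omega)
      have cr : (k3 : ℂ) = z + r := by exact_mod_cast hr
      have cy : (k2 : ℂ) = z + y := by exact_mod_cast hy
      have ci : (j : ℂ) = y + i := by exact_mod_cast hi
      rw [show k2 - z = y by omega, show k2 - y = z by omega, show j - y = i by omega,
        show k1 + y - j = r by omega]
      rw [qbin_eq _ (2 * c + z + 1) r (by omega) (by linear_combination hc3 + cr),
        qbin_eq _ (a + c - f) z (by omega) (by ring),
        qbin_eq _ (b + f - d) y (by omega) (by linear_combination hc + cy),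
        qbin_eq _ (d + f - b) i (by omega) (by linear_combination -hc + hf + ci - cy)]
      have t1 : a + f + c + 1 = 2 * c + 2 + k3 - 1 := by linear_combination hc3
      have t2 : a + c - f + z = 2 * a - k1 + j - y := by linear_combination -hc3 - hK' - cy
      have t3 : b + f - d + (d + e - c) - z = 2 * b - j + y := by
        linear_combination -hf + hc + cy
      have t4 : d + c - e + z = 2 * d - y := by linear_combination -hc - cy
      have t5 : 2 * a + 2 * b + 2 * d - 2 * k1 - k2 + 1 = 2 * c + 2 + k2 - 1 := by
        linear_combination 2 * he + 2 * hc
      rw [t1, t2, t3, t4, t5, rise_eq_fall n _ k2, rise_eq_fall n _ k3]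
      have s1 : fall n (2 * c + 2 + k2 - 1) k2 = fall n (2 * c + 2 + k2 - 1) y *
          fall n (2 * c + 1 + z) z := by
        rw [show k2 = y + z by omega, fall_add]
        congr 2; push_cast; ring
      have s2 : fall n (2 * c + 2 + k3 - 1) k3 = fall n (2 * c + 2 + k3 - 1) r *
          fall n (2 * c + 1 + z) z := by
        rw [show k3 = r + z by omega, fall_add]
        congr 2; push_cast; ring
      rw [s1, s2]
      have sg : ((-1 : ℂ) ^ y) * (-1) ^ y = 1 := by rw [← mul_pow]; simp
      rw [hy, pow_add]
      have w1 := qfac_ne hn (k := r) (by omega)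
      have w2 := qfac_ne hn (k := y) (by omega)
      have w3 := qfac_ne hn (k := z) (by omega)
      have w4 := qfac_ne hn (k := i) (by omega)
      generalize fall n (2 * c + 2 + ((z + y : ℕ) : ℂ) - 1) y = G1
      generalize fall n (2 * c + 2 + (k3 : ℂ) - 1) r = G2
      generalize fall n (2 * c + 1 + (z : ℂ)) z = G3
      generalize fall n (2 * a - k1 + j - y) z = G4
      generalize fall n (2 * b - j + y) y = G5
      generalize fall n (2 * d - y) i = G6
      generalize (-1 : ℂ) ^ y = ey at *
      field_simp
      linear_combination -(G1 * G2 * G3 * G4 * G5 * G6) * sg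
  have hb : Bn n 0 (2 * f) ≠ 0 := Bn_ne hn 0 _ h2f
  generalize (∑ z ∈ Finset.Icc (k2 - j) (min k2 k3),
    (-1 : ℂ) ^ z * qbin n (a + f + c + 1) (2 * c + (z : ℂ) + 1) *
    qbin n ((a + c - f) + (z : ℂ)) (a + c - f) *
    qbin n ((b + f - d) + (d + e - c) - (z : ℂ)) (b + f - d) *
    qbin n ((d + c - e) + (z : ℂ)) (d + f - b)) = S at *
  rw [← hS]
  rw [show (-1) ^ (n - 1) * fall n (2 * f) (n - 1) / qfac n (n - 1) = (-1) ^ (n - 1) * Bn n 0 (2 * f) by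
    rw [Bn, Nat.sub_zero]; ring]
  rw [show fall n (2 * e) (n - 1 - k1) / qfac n (n - 1 - k1) = Bn n k1 (2 * e) from rfl]
  rw [pow_add, inv_div, mul_inv]
  have hsg : ((-1 : ℂ) ^ (n - 1)) ≠ 0 := by simp
  generalize ((-1 : ℂ) ^ (n - 1)) = s1 at *
  generalize rise n (2 * c + 2) k2 = R2 at *
  field_simp

theorem term_eq {n : ℕ} (hn : 2 ≤ n) (a b c d e f : ℂ) (k1 k2 j k3 u w : ℕ) (h1 : k1 < n)
    (h2 : k2 < n) (hj : j < n) (h3 : k3 < n) (hu : u < n) (hw : w < n)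
    (he : a + b - e = k1) (hc : d + e - c = k2)
    (hf : b + d - f = j) (hK : j + k3 = k1 + k2) (hjw : j ≤ w)
    (h2a : NotInt (2 * a)) (h2c : NotInt (2 * c)) (h2f : NotInt (2 * f)) :
    sixj n a b e d c f * (Bn n j (2 * f) * Bn n k3 (2 * c) *
          (1 / fall n (2 * f) (w - j) * fall n (2 * d - j) (w - j) *
            (qfac n k3 / (qfac n u * qfac n (w - j)))))
      = ((-1) ^ k2 * qfac n k2 * qfac n k2 * Bn n k1 (2 * e) * Bn n 0 (2 * c) /
          (fall n (2 * e) k2 * rise n (2 * c + 2) k2)) *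
        ((-1) ^ j * qn n (2 * b + 2 * d + 1 - 2 * j) /
        fall n (2 * b + 2 * d + 1 - j) (w + 1) * fall n (2 * d - j) (w - j) /
          (qfac n u * qfac n (w - j)) * U2 n k1 k2 j (2 * a) (2 * b) (2 * d)) := by
  rw [sixj_eq hn a b c d e f k1 k2 j k3 h1 h2 hj h3 he hc hf hK h2c h2f,
    Bn_eq hn j hj (2 * f) h2f, Bn_eq hn k3 h3 (2 * c) h2c, U_eq hn k1 k2 j _ _ _ h2a h1 h2 hj (by omega)]
  obtain ⟨s, rfl⟩ := Nat.exists_eq_add_of_le hjw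
  rw [Nat.add_sub_cancel_left]
  have hfall : fall n (2 * b + 2 * d + 1 - j) (j + s + 1) =
      rise n (2 * f + 2) j * (qn n (2 * b + 2 * d + 1 - 2 * j) * fall n (2 * f) s) := by
    rw [show j + s + 1 = j + (s + 1) by ring, fall_add, fall_succ', rise_eq_fall]
    congr 2
    · linear_combination 2 * hf
    · congr 1; ring
    · congr 1; linear_combination 2 * hf
  rw [hfall]
  have r3 := rise_ne hn (h2c.shift 2 (y := 2 * c + 2) (by push_cast; ring)) k3
  have r2 := rise_ne hn (h2c.shift 2 (y := 2 * c + 2) (by push_cast; ring)) k2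
  have rj := rise_ne hn (h2f.shift 2 (y := 2 * f + 2) (by push_cast; ring)) j
  have rs := fall_ne hn h2f s
  have hq : qn n (2 * b + 2 * d + 1 - 2 * j) ≠ 0 :=
    NotInt.qn_ne hn (h2f.shift 1 (by push_cast; linear_combination 2 * hf))
  have q3 := qfac_ne hn h3
  have qj := qfac_ne hn hj
  have qu := qfac_ne hn hu
  have qs := qfac_ne hn (k := s) (by omega)
  have hb : Bn n 0 (2 * f) ≠ 0 := Bn_ne hn 0 _ h2f
  have sg : ((-1 : ℂ) ^ k3) * (-1) ^ k3 = 1 := by rw [← mul_pow]; simp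
  generalize rise n (2 * c + 2) k3 = R3 at *
  generalize rise n (2 * c + 2) k2 = R2 at *
  generalize rise n (2 * f + 2) j = Rj at *
  generalize fall n (2 * f) s = Rs at *
  generalize qn n (2 * b + 2 * d + 1 - 2 * j) = Q at *
  generalize Bn n 0 (2 * f) = B0 at *
  generalize Bn n 0 (2 * c) = Bc at *
  generalize Bn n k1 (2 * e) = Be at *
  generalize fall n (2 * e) k2 = Fe at *
  generalize fall n (2 * d - j) s = Fd at *
  generalize U2 n k1 k2 j (2 * a) (2 * b) (2 * d) = U at *
  generalize (-1 : ℂ) ^ k3 = e3 at *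
  field_simp
  rw [pow_two, sg]
  ring

theorem slice_main {n : ℕ} (hn : 2 ≤ n) (a b c d e : ℂ) (k1 k2 : ℕ) (h1 : k1 < n)
    (h2 : k2 < n) (he : a + b - e = k1) (hc : d + e - c = k2)
    (h2a : NotInt (2 * a)) (h2c : NotInt (2 * c)) (h2e : NotInt (2 * e))
    (hbd : NotInt (2 * b + 2 * d)) (u w : ℕ) (hu : u < n) (hw : w < n) (huw : u + w = k1 + k2) :
    ((-1) ^ k2 * qfac n k2 * qfac n k2 * Bn n k1 (2 * e) * Bn n 0 (2 * c) /
          (fall n (2 * e) k2 * rise n (2 * c + 2) k2)) *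
      (∑ j ∈ Finset.range (w + 1), ((-1) ^ j * qn n (2 * b + 2 * d + 1 - 2 * j) /
        fall n (2 * b + 2 * d + 1 - j) (w + 1) * fall n (2 * d - j) (w - j) /
          (qfac n u * qfac n (w - j)) * U2 n k1 k2 j (2 * a) (2 * b) (2 * d)))
     = if w ≤ k2 then (Bn n k1 (2 * e) * Bn n k2 (2 * c) *
          (1 / fall n (2 * e) (k2 - w) * fall n (2 * a - k1) (k2 - w) *
            (qfac n k2 / (qfac n (k2 - w) * qfac n w)))) else 0 := by
  rw [slice hn k1 k2 u w (2 * a) (2 * b) (2 * d) hbd hu hw huw h2]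
  split_ifs with h
  · obtain ⟨p, rfl⟩ := Nat.exists_eq_add_of_le h
    rw [Nat.add_sub_cancel_left, Bn_eq hn (w + p) h2 (2 * c) h2c]
    have hfe : fall n (2 * e) (w + p) = fall n (2 * e) p *
        fall n (2 * a + 2 * b - 2 * k1 - (w + p : ℕ) + w) w := by
      rw [Nat.add_comm, fall_add]
      congr 2
      push_cast
      linear_combination -2 * he
    have f1 := fall_ne hn h2e (w + p)
    rw [hfe] at f1 ⊢
    have f2 := left_ne_zero_of_mul f1
    have f3 := right_ne_zero_of_mul f1
    have r2 := rise_ne hn (h2c.shift 2 (y := 2 * c + 2) (by push_cast; ring)) (w + p)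
    have q1 := qfac_ne hn hw
    have q2 := qfac_ne hn (k := p) (by omega)
    generalize rise n (2 * c + 2) (w + p) = R2 at *
    generalize fall n (2 * a + 2 * b - 2 * k1 - (w + p : ℕ) + w) w = F1 at *
    generalize fall n (2 * e) p = F2 at *
    generalize Bn n 0 (2 * c) = Bc at *
    generalize Bn n k1 (2 * e) = Be at *
    generalize fall n (2 * a - k1) p = F3 at *
    field_simp
  · rw [mul_zero]

theorem U2_zero {n : ℕ} (hn : 2 ≤ n) (k1 k2 j : ℕ) (al be de : ℂ) (h : n + j ≤ k1 + k2) :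
    U2 n k1 k2 j al be de = 0 := by
  unfold U2
  apply Finset.sum_eq_zero
  intro k hk
  have : k < j + 1 := by simpa using hk
  rw [qfac_eq_zero hn (show n ≤ k1 + k2 - k by omega)]
  simp

open Classical in
theorem sixj_defining_relation (n : ℕ) (hn : 2 ≤ n) (a b c d e : ℂ)
    (ha : NotHalfInt a) (hb : NotHalfInt b) (hc : NotHalfInt c) (hd : NotHalfInt d)
    (he : NotHalfInt e) (hbd : NotHalfInt (b + d))
    (habe : InZn n (a + b - e)) (hdec : InZn n (d + e - c)) :
    tensL n (Yinc n a b e) * Yinc n e d c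
      = ∑ j ∈ Finset.range n,
          if InZn n (a + (b + d - (j : ℂ)) - c) then
            sixj n a b e d c (b + d - (j : ℂ)) •
              (tensR n (Yinc n b d (b + d - (j : ℂ))) * Yinc n a (b + d - (j : ℂ)) c)
          else 0 := by
  obtain ⟨k1, h1, he1⟩ := habe
  obtain ⟨k2, h2, hc2⟩ := hdec
  have hc2' : e + d - c = k2 := by rw [← hc2]; ring
  have h2a := ha.two
  have h2c := hc.two
  have h2e := he.two
  have h2X : NotInt (2 * b + 2 * d) := hbd.two.shift 0 (by push_cast; ring)
  have h2f : ∀ j : ℕ, NotInt (2 * (b + d - (j : ℂ))) := fun j =>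
    hbd.two.shift (-(2 * j)) (by push_cast; ring)
  have hfj : ∀ j : ℕ, b + d - (b + d - (j : ℂ)) = j := fun j => by ring
  rw [← sub_eq_zero]
  apply reduce hn a b d c h2c
  · rw [Matrix.sub_mul, Matrix.mul_sub]
    congr 1
    · rw [Matrix.mul_assoc, Y_F hn e d c k2 h2 hc2' h2c, ← Matrix.mul_assoc,
        tensL_F hn a b e d k1 h1 he1 h2e, Matrix.mul_assoc]
    · rw [Matrix.sum_mul, Matrix.mul_sum]
      apply Finset.sum_congr rfl
      intro j hj
      have hjn : j < n := by simpa using hj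
      split_ifs with hin
      · obtain ⟨k3, h3, hk3⟩ := hin
        rw [Matrix.smul_mul, Matrix.mul_smul, Matrix.mul_assoc, Y_F hn a _ c k3 h3 hk3 h2c,
          ← Matrix.mul_assoc, tensR_F hn a b d _ j hjn (hfj j) (h2f j), Matrix.mul_assoc]
      · simp
  · rw [Matrix.sub_mul, Matrix.mul_sub]
    congr 1
    · rw [Matrix.mul_assoc, Y_E hn e d c k2 h2 hc2' h2c, ← Matrix.mul_assoc,
        tensL_E hn a b e d k1 h1 he1 h2e, Matrix.mul_assoc]
    · rw [Matrix.sum_mul, Matrix.mul_sum]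
      apply Finset.sum_congr rfl
      intro j hj
      have hjn : j < n := by simpa using hj
      split_ifs with hin
      · obtain ⟨k3, h3, hk3⟩ := hin
        rw [Matrix.smul_mul, Matrix.mul_smul, Matrix.mul_assoc, Y_E hn a _ c k3 h3 hk3 h2c,
          ← Matrix.mul_assoc, tensR_E hn a b d _ j hjn (hfj j) (h2f j), Matrix.mul_assoc]
      · simp
  · intro u w
    rw [Matrix.sub_apply, sub_eq_zero, lhs_entry hn a b c d e k1 k2 h1 h2 he1 hc2' u w,
      Matrix.sum_apply]
    have hk : ∀ j k3 : ℕ, a + (b + d - (j : ℂ)) - c = k3 → j + k3 = k1 + k2 := by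
      intro j k3 hk3
      have : (j : ℂ) + k3 = k1 + k2 := by linear_combination he1 + hc2 - hk3
      exact_mod_cast this
    by_cases huw : (u : ℕ) + w = k1 + k2
    · have hm := slice_main hn a b c d e k1 k2 h1 h2 he1 hc2 h2a h2c h2e h2X u w u.2 w.2 huw
      have hif : (if (u : ℕ) + w = k1 + k2 ∧ (w : ℕ) ≤ k2 then PH n (k1 + k2) a d u w *
          (Bn n k1 (2 * e) * Bn n k2 (2 * c) *
          (1 / fall n (2 * e) (k2 - w) * fall n (2 * a - k1) (k2 - w) *
            (qfac n k2 / (qfac n (k2 - w) * qfac n w)))) else 0) = PH n (k1 + k2) a d u w *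
          (if (w : ℕ) ≤ k2 then (Bn n k1 (2 * e) * Bn n k2 (2 * c) *
          (1 / fall n (2 * e) (k2 - w) * fall n (2 * a - k1) (k2 - w) *
            (qfac n k2 / (qfac n (k2 - w) * qfac n w)))) else 0) := by
        by_cases hw : (w : ℕ) ≤ k2
        · rw [if_pos ⟨huw, hw⟩, if_pos hw]
        · rw [if_neg (by omega), if_neg hw, mul_zero]
      rw [hif, ← hm, Finset.mul_sum, Finset.mul_sum]
      apply Finset.sum_subset_zero_on_sdiff
      · intro j hj
        have := w.2
        simp only [Finset.mem_range] at hj ⊢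
        omega
      · intro j hj
        simp only [Finset.mem_sdiff, Finset.mem_range] at hj
        split_ifs with hin
        · obtain ⟨k3, h3, hk3⟩ := hin
          rw [Matrix.smul_apply, rhs_entry hn a b c d _ j k3 hj.1 h3 (hfj j) hk3, if_neg (by omega),
            smul_zero]
        · rfl
      · intro j hj
        have hjw : j < (w : ℕ) + 1 := by simpa using hj
        have hw := w.2
        by_cases hin : InZn n (a + (b + d - (j : ℂ)) - c)
        · rw [if_pos hin]
          obtain ⟨k3, h3, hk3⟩ := hin
          have hK := hk j k3 hk3
          rw [Matrix.smul_apply, rhs_entry hn a b c d _ j k3 (by omega) h3 (hfj j) hk3,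
            if_pos (by omega), ← term_eq hn a b c d e (b + d - j) k1 k2 j k3 u w h1 h2 (by omega) h3
              u.2 w.2 he1 hc2 (hfj j) hK (by omega) h2a h2c (h2f j), hK, smul_eq_mul]
          ring
        · rw [if_neg hin, U2_zero hn]
          · simp
          · by_contra hlt
            apply hin
            refine ⟨k1 + k2 - j, by omega, ?_⟩
            rw [Nat.cast_sub (by omega)]
            push_cast
            linear_combination he1 + hc2
    · rw [if_neg (fun h => huw h.1)]
      symm
      apply Finset.sum_eq_zero
      intro j hj
      have hjn : j < n := by simpa using hj
      split_ifs with hin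
      · obtain ⟨k3, h3, hk3⟩ := hin
        have := hk j k3 hk3
        rw [Matrix.smul_apply, rhs_entry hn a b c d _ j k3 hjn h3 (hfj j) hk3, if_neg (by omega),
          smul_zero]
      · rfl

end
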